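/- arXiv:1507.06790 — 2 statements merged into one kernel-verified Lean document; each statement's English description precedes it below -/
import Mathlib

section
/- Set A(x) = 1/F̄(x). Then the contribution of large n to the renewal mass function obeys a stable local limit: the double limit lim_{δ→0} lim_{x→∞} (x/A(x))·Σ_{n > δ·A(x)} P(Sₙ = x) exists (in particular, for every sufficiently small δ > 0 the inner limit over x exists) and equals a strictly positive real constant (namely α·E(Y^{−α}), where Y is the limiting one-sided stable random variable of index α). -/
/-!
The proof is Fourier-analytic. Let `Φ` be the characteristic function of a step. Since `α < 1`,
`1 / (1 - Φ)` is integrable on the circle, so summing the geometric series gives (`tsum_tail`)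

  `Σ_{n ≥ N} P(Sₙ = x) = (2π)⁻¹ ∫_{-π}^{π} Φ(θ)^N (1 - Φ(θ))⁻¹ e^{-ixθ} dθ`.

Regular variation of `F̄` gives `(1 - Φ(t/x)) / F̄(x) → ψ(t)` with `ψ(t) = κ t^α` for `t > 0`,
`ψ(-t)` the conjugate of `ψ(t)`, and `Re κ > 0` (`exists_tendsto_one`, `kappa_re_pos`,
`tendsto_psi`). Taking for `N` the first integer above `δ A(x)` and substituting `θ = t/x`, dominated
convergence with Potter's bounds (`near_dom`) yields

  `(x / A(x)) Σ_{n > δ A(x)} P(Sₙ = x) → Λ(δ) = (2π)⁻¹ ∫ exp(-δ ψ(t)) ψ(t)⁻¹ e^{-it} dt`,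

the frequencies away from the origin being negligible (`lintegral_norm_pow`, `tendsto_tailInt`).

`Λ` is nonnegative and antitone, as a limit of such functions. Let `dens δ y` be the same integral
with `e^{-iyt}` in place of `e^{-it}`. It satisfies `dens δ y = y^{α-1} dens (δ y^{-α}) 1` for `y > 0`
(`dens_scale`), and it vanishes for `y < 0` because the walk stays in the nonnegative integers
(`dens_neg_one`). Averaging over `y ∈ [1, 2]` gives a bound for `Λ(δ)` that is uniform in `δ`, because
`|t|^{-α} min(1, 2/|t|)` is integrable (`lam_bdd`). If `Λ` were identically `0`, then `dens 1` would
vanish off `0`, and Fourier inversion would force `exp(-ψ) / ψ` to vanish at `1`, which is absurd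
(`exists_lam_pos`). Hence `Λ(δ)` increases, as `δ ↓ 0`, to a finite positive limit.
-/

open Filter Topology

/-- `convPow p n x = P(Sₙ = x)` for a random walk with i.i.d. steps distributed
according to the pmf `p` on the nonnegative integers. -/
noncomputable def convPow (p : ℕ → ℝ) : ℕ → ℕ → ℝ
  | 0, x => if x = 0 then 1 else 0
  | n + 1, x => ∑ y ∈ Finset.range (x + 1), convPow p n y * p (x - y)

/-- `Fbar p x = P(X > x)`, the tail of the step distribution. -/
noncomputable def Fbar (p : ℕ → ℝ) (x : ℝ) : ℝ := ∑' k : ℕ, if x < (k : ℝ) then p k else 0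

/-- The renewal mass function `g(x) = Σ_{n ≥ 0} P(Sₙ = x)`. -/
noncomputable def renewalMass (p : ℕ → ℝ) (x : ℕ) : ℝ := ∑' n : ℕ, convPow p n x

namespace LargeN

/-- The standing assumptions on the step distribution. -/
structure Hyp (p : ℕ → ℝ) (α : ℝ) : Prop where
  nonneg : ∀ k, 0 ≤ p k
  hasSum : HasSum p 1
  aper : ∀ d : ℕ, (∀ k, p k ≠ 0 → d ∣ k) → d = 1
  pos : 0 < α
  lt_one : α < 1
  reg : ∀ l : ℝ, 0 < l →
      Tendsto (fun x : ℝ => Fbar p (l * x) / Fbar p x) atTop (nhds (l ^ (-α)))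

variable {p : ℕ → ℝ} {α : ℝ}

/-! ### The tail function and Potter bounds -/

lemma Hyp.summable_tail (h : Hyp p α) (x : ℝ) :
    Summable fun k : ℕ => if x < (k : ℝ) then p k else 0 := by
  refine Summable.of_nonneg_of_le (fun k => ?_) (fun k => ?_) h.hasSum.summable
  · split_ifs
    · exact h.nonneg k
    · exact le_rfl
  · split_ifs
    · exact le_rfl
    · exact h.nonneg k

lemma Hyp.Fbar_nonneg (h : Hyp p α) (x : ℝ) : 0 ≤ Fbar p x := by
  refine tsum_nonneg fun k => ?_
  split_ifs
  · exact h.nonneg k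
  · exact le_rfl

lemma Hyp.Fbar_le_one (h : Hyp p α) (x : ℝ) : Fbar p x ≤ 1 := by
  rw [← h.hasSum.tsum_eq]
  refine (h.summable_tail x).tsum_le_tsum (fun k => ?_) h.hasSum.summable
  split_ifs
  · exact le_rfl
  · exact h.nonneg k

lemma Hyp.antitone (h : Hyp p α) : Antitone (Fbar p) := by
  intro x y hxy
  refine (h.summable_tail y).tsum_le_tsum (fun k => ?_) (h.summable_tail x)
  have := h.nonneg k
  split_ifs with h1 h2
  · exact le_rfl
  · exact absurd (lt_of_le_of_lt hxy h1) h2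
  · exact this
  · exact le_rfl

/-- The support of `p` is unbounded: otherwise the quotients in the definition of regular
variation would be `0 / 0 = 0` for large `x`. -/
lemma Hyp.Fbar_pos (h : Hyp p α) (x : ℝ) : 0 < Fbar p x := by
  have h1 := (h.reg 1 one_pos)
  have h2 : ∀ᶠ y : ℝ in atTop, 0 < Fbar p (1 * y) / Fbar p y :=
    h1.eventually (lt_mem_nhds (by simp))
  obtain ⟨y, hy, hxy⟩ := (h2.and (eventually_ge_atTop x)).exists
  have h3 : Fbar p y ≠ 0 := by
    rintro h0
    rw [h0, div_zero] at hy
    exact lt_irrefl _ hy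
  exact lt_of_lt_of_le (lt_of_le_of_ne (h.Fbar_nonneg y) h3.symm) (h.antitone hxy)

/-- Position of `x ≥ y` on the dyadic scale started at `y`. -/
lemma exists_dyadic {x y : ℝ} (hy : 0 < y) (hxy : y ≤ x) :
    ∃ n : ℕ, (2 : ℝ) ^ n * y ≤ x ∧ x < 2 ^ (n + 1) * y := by
  obtain ⟨n, hn1, hn2⟩ := exists_nat_pow_near ((one_le_div hy).2 hxy) (one_lt_two (α := ℝ))
  exact ⟨n, (le_div_iff₀ hy).1 hn1, (div_lt_iff₀ hy).1 hn2⟩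

/-- Potter's upper bound: `F̄(y)/F̄(x) ≤ C (x/y)^β` for `y ≤ x` and `β > α`. -/
lemma Hyp.potter_upper (h : Hyp p α) {β : ℝ} (hβ : α < β) :
    ∃ C : ℝ, 0 < C ∧ ∀ y x : ℝ, 0 < y → y ≤ x →
      Fbar p y * y ^ β ≤ C * (Fbar p x * x ^ β) := by
  have hβ0 : 0 < β := h.pos.trans hβ
  have h2 : ∀ᶠ y : ℝ in atTop, (2 : ℝ) ^ (-β) < Fbar p (2 * y) / Fbar p y :=
    (h.reg 2 two_pos).eventually (lt_mem_nhds
      (Real.rpow_lt_rpow_of_exponent_lt one_lt_two (by linarith)))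
  obtain ⟨x0, hx0⟩ := eventually_atTop.1 (h2.and (eventually_ge_atTop 1))
  have hx1 : 1 ≤ x0 := (hx0 x0 le_rfl).2
  have hstep : ∀ y, x0 ≤ y → Fbar p y ≤ 2 ^ β * Fbar p (2 * y) := by
    intro y hy
    have := (lt_div_iff₀ (h.Fbar_pos y)).1 (hx0 y hy).1
    rw [Real.rpow_neg two_pos.le, inv_mul_lt_iff₀ (by positivity)] at this
    exact this.le
  have hiter : ∀ n : ℕ, ∀ y, x0 ≤ y → Fbar p y ≤ (2 ^ n) ^ β * Fbar p (2 ^ n * y) := by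
    intro n
    induction n with
    | zero => intro y _; simp
    | succ n ih =>
      intro y hy
      have h2n : (1 : ℝ) ≤ 2 ^ n := one_le_pow₀ one_le_two
      have h3 := hstep (2 ^ n * y) (by nlinarith)
      have h4 : ((2 : ℝ) ^ (n + 1)) ^ β = (2 ^ n) ^ β * 2 ^ β := by
        rw [pow_succ, Real.mul_rpow (by positivity) (by positivity)]
      calc Fbar p y ≤ (2 ^ n) ^ β * Fbar p (2 ^ n * y) := ih y hy
        _ ≤ (2 ^ n) ^ β * (2 ^ β * Fbar p (2 * (2 ^ n * y))) := by gcongr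
        _ = _ := by rw [h4, pow_succ, mul_assoc, show (2:ℝ) * (2 ^ n * y) = 2 ^ n * 2 * y by ring]
  have hbig : ∀ y x : ℝ, x0 ≤ y → y ≤ x → Fbar p y * y ^ β ≤ 2 ^ β * (Fbar p x * x ^ β) := by
    intro y x hy hyx
    have hy0 : 0 < y := by linarith
    obtain ⟨n, hn1, hn2⟩ := exists_dyadic hy0 hyx
    have hF := h.Fbar_nonneg x
    calc Fbar p y * y ^ β
        ≤ ((2 ^ (n + 1)) ^ β * Fbar p (2 ^ (n + 1) * y)) * y ^ β := by
          gcongr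
          exact hiter _ y hy
      _ ≤ ((2 ^ (n + 1)) ^ β * Fbar p x) * y ^ β := by
          gcongr
          exact h.antitone hn2.le
      _ = 2 ^ β * (Fbar p x * (2 ^ n * y) ^ β) := by
          rw [pow_succ, Real.mul_rpow (by positivity) (by positivity),
            Real.mul_rpow (by positivity) (by positivity)]
          ring
      _ ≤ _ := by gcongr
  have hF0 := h.Fbar_pos x0
  refine ⟨2 ^ β * (1 / Fbar p x0), by positivity, fun y x hy hyx => ?_⟩
  have hx : 0 < x := by linarith
  have hFx := h.Fbar_pos x
  have h2β : (1 : ℝ) ≤ 2 ^ β := Real.one_le_rpow one_le_two hβ0.le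
  have h1F : 1 ≤ 1 / Fbar p x0 := by
    rw [le_div_iff₀ hF0]; simpa using h.Fbar_le_one x0
  rcases le_total x0 y with hc | hc
  · calc _ ≤ 2 ^ β * (Fbar p x * x ^ β) := hbig y x hc hyx
      _ ≤ 2 ^ β * (1 / Fbar p x0) * (Fbar p x * x ^ β) := by
        gcongr
        nlinarith
  · rcases le_total x x0 with hc2 | hc2
    · calc Fbar p y * y ^ β ≤ 1 * x ^ β := by
            gcongr
            exact h.Fbar_le_one y
        _ ≤ (1 * (1 / Fbar p x0)) * (Fbar p x0 * x ^ β) := by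
            rw [one_mul, one_mul, ← mul_assoc, one_div, inv_mul_cancel₀ hF0.ne', one_mul]
        _ ≤ _ := by
            gcongr
            exact h.antitone hc2
    · calc Fbar p y * y ^ β ≤ 1 * x0 ^ β := by
            gcongr
            exact h.Fbar_le_one y
        _ = (1 / Fbar p x0) * (Fbar p x0 * x0 ^ β) := by
            field_simp
        _ ≤ (1 / Fbar p x0) * (2 ^ β * (Fbar p x * x ^ β)) := by
            gcongr ?_ * ?_
            exact hbig x0 x le_rfl hc2
        _ = _ := by ring

/-- Potter's lower bound: `F̄(x)/F̄(y) ≤ C (x/y)^(-γ)` for `y₀ ≤ y ≤ x` and `γ < α`. -/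
lemma Hyp.potter_lower (h : Hyp p α) {γ : ℝ} (hγ0 : 0 < γ) (hγ : γ < α) {y0 : ℝ} (hy0 : 0 < y0) :
    ∃ C : ℝ, 0 < C ∧ ∀ y x : ℝ, y0 ≤ y → y ≤ x →
      Fbar p x * x ^ γ ≤ C * (Fbar p y * y ^ γ) := by
  have h2 : ∀ᶠ y : ℝ in atTop, Fbar p (2 * y) / Fbar p y < (2 : ℝ) ^ (-γ) :=
    (h.reg 2 two_pos).eventually (gt_mem_nhds
      (Real.rpow_lt_rpow_of_exponent_lt one_lt_two (by linarith)))
  obtain ⟨x0, hx0⟩ := eventually_atTop.1 (h2.and (eventually_ge_atTop (max 1 y0)))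
  have hx1 : 1 ≤ x0 := (le_max_left _ _).trans (hx0 x0 le_rfl).2
  have hx2 : y0 ≤ x0 := (le_max_right _ _).trans (hx0 x0 le_rfl).2
  have hstep : ∀ y, x0 ≤ y → 2 ^ γ * Fbar p (2 * y) ≤ Fbar p y := by
    intro y hy
    have := (div_lt_iff₀ (h.Fbar_pos y)).1 (hx0 y hy).1
    rw [Real.rpow_neg two_pos.le, lt_inv_mul_iff₀ (by positivity)] at this
    exact this.le
  have hiter : ∀ n : ℕ, ∀ y, x0 ≤ y → (2 ^ n) ^ γ * Fbar p (2 ^ n * y) ≤ Fbar p y := by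
    intro n
    induction n with
    | zero => intro y _; simp
    | succ n ih =>
      intro y hy
      have h2n : (1 : ℝ) ≤ 2 ^ n := one_le_pow₀ one_le_two
      have h3 := hstep (2 ^ n * y) (by nlinarith)
      have h4 : ((2 : ℝ) ^ (n + 1)) ^ γ = (2 ^ n) ^ γ * 2 ^ γ := by
        rw [pow_succ, Real.mul_rpow (by positivity) (by positivity)]
      calc _ = (2 ^ n) ^ γ * (2 ^ γ * Fbar p (2 * (2 ^ n * y))) := by
            rw [h4, pow_succ, mul_assoc, show (2:ℝ) * (2 ^ n * y) = 2 ^ n * 2 * y by ring]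
        _ ≤ (2 ^ n) ^ γ * Fbar p (2 ^ n * y) := by gcongr
        _ ≤ _ := ih y hy
  have hbig : ∀ y x : ℝ, x0 ≤ y → y ≤ x → Fbar p x * x ^ γ ≤ 2 ^ γ * (Fbar p y * y ^ γ) := by
    intro y x hy hyx
    have hy0 : 0 < y := by linarith
    have hx : 0 < x := by linarith
    obtain ⟨n, hn1, hn2⟩ := exists_dyadic hy0 hyx
    have hF := h.Fbar_nonneg x
    have hF' := h.Fbar_nonneg (2 ^ n * y)
    calc Fbar p x * x ^ γ ≤ Fbar p (2 ^ n * y) * (2 ^ (n + 1) * y) ^ γ := by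
          gcongr
          exact h.antitone hn1
      _ = 2 ^ γ * (((2 ^ n) ^ γ * Fbar p (2 ^ n * y)) * y ^ γ) := by
          rw [pow_succ, Real.mul_rpow (by positivity) (by positivity),
            Real.mul_rpow (by positivity) (by positivity)]
          ring
      _ ≤ _ := by
          gcongr
          exact hiter _ y hy
  have hF0 := h.Fbar_pos x0
  -- the extra factor absorbs the bounded range `[y₀, x₀]`
  set B : ℝ := x0 ^ γ / (Fbar p x0 * y0 ^ γ) with hB
  have hB1 : 1 ≤ B := by
    rw [hB, le_div_iff₀ (by positivity)]
    calc 1 * (Fbar p x0 * y0 ^ γ) ≤ 1 * (1 * x0 ^ γ) := by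
          gcongr
          exact h.Fbar_le_one x0
      _ = _ := by ring
  have h2γ : (1 : ℝ) ≤ 2 ^ γ := Real.one_le_rpow one_le_two hγ0.le
  have hsmall : ∀ y, y0 ≤ y → y ≤ x0 → x0 ^ γ ≤ B * (Fbar p y * y ^ γ) := by
    intro y h1 h2
    calc x0 ^ γ = B * (Fbar p x0 * y0 ^ γ) := by rw [hB]; field_simp
      _ ≤ _ := by
        have := h.Fbar_nonneg y
        gcongr
        exact h.antitone h2
  refine ⟨2 ^ γ * B, by positivity, fun y x hy hyx => ?_⟩
  have hy' : 0 < y := by linarith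
  have hx : 0 < x := by linarith
  have hFx := h.Fbar_pos x
  have hFy := h.Fbar_pos y
  rcases le_total x0 y with hc | hc
  · calc _ ≤ 2 ^ γ * (Fbar p y * y ^ γ) := hbig y x hc hyx
      _ ≤ 2 ^ γ * B * (Fbar p y * y ^ γ) := by
        gcongr
        nlinarith
  · rcases le_total x x0 with hc2 | hc2
    · calc Fbar p x * x ^ γ ≤ 1 * x0 ^ γ := by
            gcongr
            exact h.Fbar_le_one x
        _ ≤ B * (Fbar p y * y ^ γ) := by rw [one_mul]; exact hsmall y hy hc
        _ ≤ _ := by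
            gcongr
            nlinarith
    · calc Fbar p x * x ^ γ ≤ 2 ^ γ * (Fbar p x0 * x0 ^ γ) := hbig x0 x le_rfl hc2
        _ ≤ 2 ^ γ * (1 * x0 ^ γ) := by
            gcongr
            exact h.Fbar_le_one x0
        _ ≤ 2 ^ γ * (B * (Fbar p y * y ^ γ)) := by
            rw [one_mul]
            gcongr ?_ * ?_
            exact hsmall y hy hc
        _ = _ := by ring

lemma Hyp.Fbar_tendsto (h : Hyp p α) : Tendsto (Fbar p) atTop (𝓝 0) := by
  have hγ0 : 0 < α / 2 := half_pos h.pos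
  obtain ⟨C, hC, hP⟩ := h.potter_lower hγ0 (half_lt_self h.pos) one_pos
  have h1 : Tendsto (fun x : ℝ => C * (Fbar p 1 * 1 ^ (α / 2)) * x ^ (-(α / 2))) atTop (𝓝 0) := by
    simpa using (tendsto_rpow_neg_atTop hγ0).const_mul (C * (Fbar p 1 * 1 ^ (α / 2)))
  refine squeeze_zero' (Eventually.of_forall h.Fbar_nonneg) ?_ h1
  filter_upwards [eventually_ge_atTop 1] with x hx
  have hx0 : 0 < x := by linarith
  rw [Real.rpow_neg hx0.le, ← div_eq_mul_inv, le_div_iff₀ (by positivity)]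
  exact hP 1 x le_rfl hx

open MeasureTheory

/-! ### The characteristic function and its behaviour at the origin -/

/-- The unit complex number `e^{iu}`. -/
noncomputable def ex (u : ℝ) : ℂ := Complex.exp (u * Complex.I)

lemma norm_ex (u : ℝ) : ‖ex u‖ = 1 := Complex.norm_exp_ofReal_mul_I u

lemma ex_zero : ex 0 = 1 := by simp [ex]

lemma ex_add (a b : ℝ) : ex (a + b) = ex a * ex b := by
  simp [ex, add_mul, Complex.exp_add]

lemma ex_neg (a : ℝ) : ex (-a) = (starRingEnd ℂ) (ex a) := by
  simp [ex, ← Complex.exp_conj]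

lemma ex_re (a : ℝ) : (ex a).re = Real.cos a := Complex.exp_ofReal_mul_I_re a

lemma continuous_ex : Continuous ex := by unfold ex; fun_prop

lemma hasDerivAt_ex (v : ℝ) : HasDerivAt ex (ex v * Complex.I) v := by
  unfold ex
  have h1 : HasDerivAt (fun v : ℝ => (v : ℂ) * Complex.I) (1 * Complex.I) v :=
    (Complex.ofRealCLM.hasDerivAt (x := v)).mul_const Complex.I
  simpa using h1.cexp

/-- The characteristic function `E e^{iθX}` of the step distribution. -/
noncomputable def Phi (p : ℕ → ℝ) (θ : ℝ) : ℂ := ∑' k : ℕ, (p k : ℂ) * ex (k * θ)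

lemma Hyp.norm_term (h : Hyp p α) (k : ℕ) (u : ℝ) : ‖(p k : ℂ) * ex u‖ = p k := by
  rw [norm_mul, norm_ex, mul_one, Complex.norm_real, Real.norm_of_nonneg (h.nonneg k)]

lemma Hyp.summable_Phi (h : Hyp p α) (θ : ℝ) : Summable fun k : ℕ => (p k : ℂ) * ex (k * θ) := by
  refine Summable.of_norm ?_
  simp_rw [h.norm_term]
  exact h.hasSum.summable

lemma Hyp.hasSum_Phi (h : Hyp p α) (θ : ℝ) :
    HasSum (fun k : ℕ => (p k : ℂ) * ex (k * θ)) (Phi p θ) := (h.summable_Phi θ).hasSum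

lemma Hyp.norm_Phi_le (h : Hyp p α) (θ : ℝ) : ‖Phi p θ‖ ≤ 1 :=
  tsum_of_norm_bounded h.hasSum fun k => (h.norm_term k _).le

lemma Hyp.Phi_zero (h : Hyp p α) : Phi p 0 = 1 := by
  have := (Complex.hasSum_ofReal.2 h.hasSum).tsum_eq
  simpa [Phi, ex_zero] using this

lemma Hyp.continuous_Phi (h : Hyp p α) : Continuous (Phi p) := by
  refine continuous_tsum (u := p) (fun k => ?_) h.hasSum.summable fun k θ => (h.norm_term k _).le
  exact continuous_const.mul (continuous_ex.comp (by fun_prop))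

lemma Phi_neg (p : ℕ → ℝ) (θ : ℝ) : Phi p (-θ) = (starRingEnd ℂ) (Phi p θ) := by
  rw [Phi, Phi, Complex.conj_tsum]
  refine tsum_congr fun k => ?_
  rw [map_mul, Complex.conj_ofReal, ← ex_neg, mul_neg]

lemma Hyp.hasSum_one_sub_Phi (h : Hyp p α) (θ : ℝ) :
    HasSum (fun k : ℕ => (p k : ℂ) * (1 - ex (k * θ))) (1 - Phi p θ) := by
  have := (Complex.hasSum_ofReal.2 h.hasSum).sub (h.hasSum_Phi θ)
  simpa [mul_sub] using this

lemma one_sub_ex_eq (x : ℝ) (hx : 0 < x) (M : ℝ) (hM : 0 ≤ M) (k : ℕ) :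
    1 - ex (min (k / x) M)
      = ∫ v in Set.Ioc 0 M, (if x * v < k then -(ex v * Complex.I) else 0) := by
  have h0 : 0 ≤ min (k / x) M := le_min (by positivity) hM
  have h1 : ∫ v in (0 : ℝ)..(min (k / x) M), ex v * Complex.I = ex (min (k / x) M) - ex 0 :=
    intervalIntegral.integral_eq_sub_of_hasDerivAt (fun v _ => hasDerivAt_ex v)
      ((continuous_ex.mul continuous_const).intervalIntegrable _ _)
  have h2 : ∀ v : ℝ, (if x * v < k then -(ex v * Complex.I) else 0)
      = (Set.Iio ((k : ℝ) / x)).indicator (fun v => -(ex v * Complex.I)) v := by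
    intro v
    have : x * v < k ↔ v ∈ Set.Iio ((k : ℝ) / x) := by
      rw [Set.mem_Iio, lt_div_iff₀ hx, mul_comm]
    simp only [Set.indicator, this]
  simp_rw [h2]
  rw [setIntegral_indicator measurableSet_Iio, integral_neg]
  have h3 : (Set.Ioc 0 M ∩ Set.Iio ((k : ℝ) / x) : Set ℝ) =ᵐ[volume]
      Set.Ioc 0 (min ((k : ℝ) / x) M) := by
    have : (Set.Iio ((k : ℝ) / x)) =ᵐ[volume] Set.Iic ((k : ℝ) / x) := Iio_ae_eq_Iic
    have h4 := (ae_eq_refl (μ := volume) (Set.Ioc 0 M)).inter this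
    have h5 : (Set.Ioc 0 M ∩ Set.Iic ((k : ℝ) / x) : Set ℝ) = Set.Ioc 0 (min ((k : ℝ) / x) M) := by
      ext v
      simp only [Set.mem_inter_iff, Set.mem_Ioc, Set.mem_Iic, le_min_iff]
      tauto
    rwa [h5] at h4
  rw [setIntegral_congr_set h3, ← intervalIntegral.integral_of_le h0, h1, ex_zero]
  ring

/-- Integration by parts for the truncated variable `min (X/x) M`. -/
lemma Hyp.hasSum_trunc (h : Hyp p α) (x : ℝ) (hx : 0 < x) (M : ℝ) (hM : 0 ≤ M) :
    HasSum (fun k : ℕ => (p k : ℂ) * (1 - ex (min (k / x) M)))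
      (∫ v in Set.Ioc 0 M, (Fbar p (x * v) : ℂ) * -(ex v * Complex.I)) := by
  simp_rw [one_sub_ex_eq x hx M hM, ← integral_const_mul]
  refine hasSum_integral_of_dominated_convergence (fun k _ => p k) (fun k => ?_) (fun k => ?_)
    ?_ ?_ ?_
  · refine Measurable.aestronglyMeasurable ?_
    refine Measurable.const_mul ?_ _
    refine Measurable.ite ?_ (by have := continuous_ex.measurable; fun_prop) measurable_const
    exact measurableSet_lt (by fun_prop) measurable_const
  · refine ae_of_all _ fun v => ?_
    rw [norm_mul, Complex.norm_real, Real.norm_of_nonneg (h.nonneg k)]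
    refine mul_le_of_le_one_right (h.nonneg k) ?_
    split_ifs
    · simp [norm_ex]
    · simp
  · exact ae_of_all _ fun v => h.hasSum.summable
  · simp
  · refine ae_of_all _ fun v => ?_
    have h1 : HasSum (fun k : ℕ => if x * v < (k : ℝ) then p k else 0) (Fbar p (x * v)) :=
      (h.summable_tail _).hasSum
    have h2 := (Complex.hasSum_ofReal.2 h1).mul_right (-(ex v * Complex.I))
    refine h2.congr_fun fun k => ?_
    split_ifs <;> simp

/-- Truncating `X / x` at `M` changes `1 - Φ(1/x)` only through the event `X > M x`. -/
lemma Hyp.norm_sub_trunc_le (h : Hyp p α) (x : ℝ) (hx : 0 < x) (M : ℝ) (hM : 0 ≤ M) :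
    ‖(1 - Phi p (1 / x)) - ∫ v in Set.Ioc 0 M, (Fbar p (x * v) : ℂ) * -(ex v * Complex.I)‖
      ≤ 2 * Fbar p (M * x) := by
  have h1 := (h.hasSum_one_sub_Phi (1 / x)).sub (h.hasSum_trunc x hx M hM)
  have h2 : HasSum (fun k : ℕ => 2 * if M * x < (k : ℝ) then p k else 0) (2 * Fbar p (M * x)) :=
    (h.summable_tail _).hasSum.mul_left 2
  rw [← h1.tsum_eq]
  refine tsum_of_norm_bounded h2 fun k => ?_
  split_ifs with hk
  · rw [← mul_sub, norm_mul, Complex.norm_real, Real.norm_of_nonneg (h.nonneg k), mul_comm]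
    gcongr
    · exact h.nonneg k
    · calc _ = ‖ex (min (k / x) M) - ex (k * (1 / x))‖ := by congr 1; ring
        _ ≤ 1 + 1 := by
          refine (norm_sub_le _ _).trans ?_
          rw [norm_ex, norm_ex]
        _ = 2 := by norm_num
  · have : min (k / x) M = k * (1 / x) := by
      rw [min_eq_left, mul_one_div]
      rw [div_le_iff₀ hx]
      exact not_lt.1 hk
    rw [this]
    simp

/-- A function which is eventually within any `ε` of some constant converges. -/
lemma exists_tendsto_of_approx {f : ℝ → ℂ}
    (hf : ∀ ε > 0, ∃ l : ℂ, ∀ᶠ x in atTop, ‖f x - l‖ ≤ ε) : ∃ l, Tendsto f atTop (𝓝 l) := by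
  refine cauchy_map_iff_exists_tendsto.1 ?_
  rw [Metric.cauchy_iff]
  refine ⟨inferInstance, fun ε hε => ?_⟩
  obtain ⟨l, hl⟩ := hf (ε / 3) (by positivity)
  refine ⟨f '' {x | ‖f x - l‖ ≤ ε / 3}, image_mem_map hl, ?_⟩
  rintro _ ⟨x, hx, rfl⟩ _ ⟨y, hy, rfl⟩
  have hx' : dist (f x) l ≤ ε / 3 := by rw [dist_eq_norm]; exact hx
  have hy' : dist (f y) l ≤ ε / 3 := by rw [dist_eq_norm]; exact hy
  have := dist_triangle_right (f x) (f y) l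
  linarith

lemma Hyp.tendsto_trunc (h : Hyp p α) (M : ℝ) (hM : 1 ≤ M) :
    Tendsto (fun x : ℝ => ∫ v in Set.Ioc 0 M,
        (Fbar p (x * v) / Fbar p x : ℝ) * -(ex v * Complex.I)) atTop
      (𝓝 (∫ v in Set.Ioc 0 M, ((v ^ (-α) : ℝ) : ℂ) * -(ex v * Complex.I))) := by
  obtain ⟨β, hβ1, hβ2⟩ := exists_between h.lt_one
  obtain ⟨C, hC, hP⟩ := h.potter_upper hβ1
  have hM0 : 0 < M := by linarith
  refine tendsto_integral_filter_of_dominated_convergence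
    (fun v => (C + M ^ β) * v ^ (-β)) ?_ ?_ ?_ ?_
  · filter_upwards with x
    refine Measurable.aestronglyMeasurable ?_
    have h1 := h.antitone.measurable
    have h2 := continuous_ex.measurable
    fun_prop
  · filter_upwards [eventually_gt_atTop 0] with x hx
    refine (ae_restrict_iff' measurableSet_Ioc).2 (ae_of_all _ fun v hv => ?_)
    have hFx := h.Fbar_pos x
    have hFxv := h.Fbar_pos (x * v)
    have hv0 := hv.1
    rw [norm_mul, norm_neg, norm_mul, norm_ex, Complex.norm_I, mul_one, mul_one, Complex.norm_real,
      Real.norm_of_nonneg (by positivity), Real.rpow_neg hv0.le, ← div_eq_mul_inv,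
      div_le_div_iff₀ hFx (by positivity)]
    rcases le_total v 1 with hv1 | hv1
    · have := hP (x * v) x (by positivity) (by nlinarith)
      rw [Real.mul_rpow hx.le hv0.le] at this
      have hxβ : 0 < x ^ β := by positivity
      have : Fbar p (x * v) * v ^ β ≤ C * Fbar p x := by
        refine le_of_mul_le_mul_right ?_ hxβ
        linarith
      nlinarith [mul_pos (Real.rpow_pos_of_pos hM0 β) hFx]
    · have h1 : Fbar p (x * v) ≤ Fbar p x := h.antitone (by nlinarith)
      have h2 : v ^ β ≤ M ^ β :=
        Real.rpow_le_rpow hv0.le hv.2 (h.pos.trans hβ1).le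
      calc Fbar p (x * v) * v ^ β ≤ Fbar p x * M ^ β := by gcongr
        _ ≤ _ := by nlinarith [mul_pos hC hFx]
  · refine Integrable.const_mul ?_ _
    have := (intervalIntegral.intervalIntegrable_rpow' (a := 0) (b := M) (r := -β) (by linarith))
    exact (intervalIntegrable_iff_integrableOn_Ioc_of_le hM0.le).1 this
  · refine (ae_restrict_iff' measurableSet_Ioc).2 (ae_of_all _ fun v hv => ?_)
    refine Tendsto.mul ?_ tendsto_const_nhds
    have := h.reg v hv.1
    simp_rw [mul_comm v] at this
    exact (Complex.continuous_ofReal.tendsto _).comp this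

/-- `(1 - Φ(1/x)) / F̄(x)` converges. The contribution of `X > M x` is at most
`2 F̄(M x)/F̄(x) → 2 M^{-α}`, and the rest converges by dominated convergence. -/
lemma Hyp.exists_tendsto_one (h : Hyp p α) :
    ∃ κ : ℂ, Tendsto (fun x : ℝ => (1 - Phi p (1 / x)) / (Fbar p x : ℂ)) atTop (𝓝 κ) := by
  refine exists_tendsto_of_approx fun ε hε => ?_
  obtain ⟨M, hM1, hM2⟩ : ∃ M : ℝ, 1 ≤ M ∧ M ^ (-α) < ε / 4 := by
    have := (tendsto_rpow_neg_atTop h.pos).eventually (gt_mem_nhds (show 0 < ε / 4 by positivity))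
    obtain ⟨M, h1, h2⟩ := (this.and (eventually_ge_atTop 1)).exists
    exact ⟨M, h2, h1⟩
  have hM0 : 0 < M := by linarith
  refine ⟨∫ v in Set.Ioc 0 M, ((v ^ (-α) : ℝ) : ℂ) * -(ex v * Complex.I), ?_⟩
  · filter_upwards [(h.reg M hM0).eventually (gt_mem_nhds hM2), eventually_gt_atTop 0,
      (tendsto_iff_norm_sub_tendsto_zero.1 (h.tendsto_trunc M hM1)).eventually
        (gt_mem_nhds (show 0 < ε / 4 by positivity))] with x hx1 hx0 hx2
    have hFx := h.Fbar_pos x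
    have h3 := h.norm_sub_trunc_le x hx0 M hM0.le
    have h4 : (∫ v in Set.Ioc 0 M, (Fbar p (x * v) : ℂ) * -(ex v * Complex.I)) / (Fbar p x : ℂ)
        = ∫ v in Set.Ioc 0 M, (Fbar p (x * v) / Fbar p x : ℝ) * -(ex v * Complex.I) := by
      rw [← integral_div]
      congr 1
      ext v
      push_cast
      ring
    have h5 : ‖(1 - Phi p (1 / x)) / (Fbar p x : ℂ) -
        ∫ v in Set.Ioc 0 M, (Fbar p (x * v) / Fbar p x : ℝ) * -(ex v * Complex.I)‖ ≤ ε / 2 := by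
      rw [← h4, ← sub_div, norm_div, Complex.norm_real, Real.norm_of_nonneg hFx.le,
        div_le_iff₀ hFx]
      rw [div_lt_iff₀ hFx] at hx1
      linarith
    have h6 := norm_sub_le_norm_sub_add_norm_sub ((1 - Phi p (1 / x)) / (Fbar p x : ℂ))
      (∫ v in Set.Ioc 0 M, (Fbar p (x * v) / Fbar p x : ℝ) * -(ex v * Complex.I))
      (∫ v in Set.Ioc 0 M, ((v ^ (-α) : ℝ) : ℂ) * -(ex v * Complex.I))
    linarith

/-- The event `x < X ≤ 2x` alone bounds `Re (1 - Φ(1/x)) = E (1 - cos (X/x))` from below. -/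
lemma Hyp.re_one_sub_Phi_ge (h : Hyp p α) {x : ℝ} (hx : 0 < x) :
    (1 - Real.cos 1) * (Fbar p x - Fbar p (2 * x)) ≤ (1 - Phi p (1 / x)).re := by
  have h1 := Complex.hasSum_re (h.hasSum_one_sub_Phi (1 / x))
  have h2 := (((h.summable_tail x).hasSum).sub ((h.summable_tail (2 * x)).hasSum)).mul_left
    (1 - Real.cos 1)
  refine hasSum_le (fun k => ?_) h2 h1
  have hk := h.nonneg k
  rw [Complex.re_ofReal_mul, Complex.sub_re, ex_re, Complex.one_re, mul_one_div]
  have h0 : 0 ≤ p k * (1 - Real.cos (k / x)) :=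
    mul_nonneg hk (sub_nonneg.2 (Real.cos_le_one _))
  split_ifs with ha hb
  · simpa using h0
  · rw [sub_zero, mul_comm]
    gcongr
    refine Real.cos_le_cos_of_nonneg_of_le_pi zero_le_one ?_ ?_
    · rw [div_le_iff₀ hx]
      have := Real.pi_gt_three
      have := not_lt.1 hb
      nlinarith
    · rw [le_div_iff₀ hx]; linarith
  · linarith
  · simpa using h0

lemma Hyp.kappa_re_pos (h : Hyp p α) {κ : ℂ}
    (hκ : Tendsto (fun x : ℝ => (1 - Phi p (1 / x)) / (Fbar p x : ℂ)) atTop (𝓝 κ)) :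
    0 < κ.re := by
  have h1 : Tendsto (fun x : ℝ => (1 - Phi p (1 / x)).re / Fbar p x) atTop (𝓝 κ.re) := by
    have := (Complex.continuous_re.tendsto _).comp hκ
    refine this.congr fun x => ?_
    simp [Complex.div_ofReal_re]
  have h2 : Tendsto (fun x : ℝ => (1 - Real.cos 1) * (1 - Fbar p (2 * x) / Fbar p x)) atTop
      (𝓝 ((1 - Real.cos 1) * (1 - 2 ^ (-α)))) :=
    ((h.reg 2 two_pos).const_sub 1).const_mul _
  have h3 : (1 - Real.cos 1) * (1 - 2 ^ (-α)) ≤ κ.re := by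
    refine le_of_tendsto_of_tendsto h2 h1 ?_
    filter_upwards [eventually_gt_atTop 0] with x hx
    have hF := h.Fbar_pos x
    rw [le_div_iff₀ hF]
    have := h.re_one_sub_Phi_ge hx
    calc _ = (1 - Real.cos 1) * (Fbar p x - Fbar p (2 * x)) := by field_simp
      _ ≤ _ := this
  refine lt_of_lt_of_le (mul_pos ?_ ?_) h3
  · have : Real.cos 1 < Real.cos 0 :=
      Real.cos_lt_cos_of_nonneg_of_le_pi le_rfl (by linarith [Real.pi_gt_three]) one_pos
    rw [Real.cos_zero] at this
    linarith
  · have : (2 : ℝ) ^ (-α) < 1 :=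
      Real.rpow_lt_one_of_one_lt_of_neg one_lt_two (by linarith [h.pos])
    linarith

/-- Near the origin `|Φ(θ)|` and `|1 - Φ(θ)|` are controlled by `F̄(1/|θ|)`. -/
lemma Hyp.near_bounds (h : Hyp p α) {κ : ℂ}
    (hκ : Tendsto (fun x : ℝ => (1 - Phi p (1 / x)) / (Fbar p x : ℂ)) atTop (𝓝 κ)) :
    ∃ η : ℝ, 0 < η ∧ ∃ c : ℝ, 0 < c ∧ ∀ θ : ℝ, θ ≠ 0 → |θ| ≤ η →
      ‖Phi p θ‖ ≤ Real.exp (-(c * Fbar p (1 / |θ|))) ∧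
      c * Fbar p (1 / |θ|) ≤ ‖1 - Phi p θ‖ := by
  have hpos := h.kappa_re_pos hκ
  have h1 : Tendsto (fun x : ℝ => (1 - Phi p (1 / x)).re / Fbar p x) atTop (𝓝 κ.re) := by
    have := (Complex.continuous_re.tendsto _).comp hκ
    refine this.congr fun x => ?_
    simp [Complex.div_ofReal_re]
  have h2 : Tendsto (fun x : ℝ => 2 * ((1 - Phi p (1 / x)).re / Fbar p x) -
      ‖(1 - Phi p (1 / x)) / (Fbar p x : ℂ)‖ ^ 2 * Fbar p x) atTop
      (𝓝 (2 * κ.re - ‖κ‖ ^ 2 * 0)) :=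
    (h1.const_mul 2).sub ((hκ.norm.pow 2).mul h.Fbar_tendsto)
  obtain ⟨X, hX⟩ := eventually_atTop.1 ((h1.eventually (lt_mem_nhds (half_lt_self hpos))).and
    ((h2.eventually (lt_mem_nhds (show κ.re < _ by linarith))).and (eventually_ge_atTop 1)))
  have hX1 : 1 ≤ X := (hX X le_rfl).2.2
  have key : ∀ θ : ℝ, 0 < θ → θ ≤ 1 / X → ‖Phi p θ‖ ≤ Real.exp (-(κ.re / 2 * Fbar p (1 / θ))) ∧
      κ.re / 2 * Fbar p (1 / θ) ≤ ‖1 - Phi p θ‖ := by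
    intro θ h0 hθ
    have hx : X ≤ 1 / θ := by
      rw [le_div_iff₀ h0]; rw [le_div_iff₀ (by linarith)] at hθ; linarith
    obtain ⟨ha, hb, -⟩ := hX (1 / θ) hx
    have hF := h.Fbar_pos (1 / θ)
    rw [one_div_one_div] at ha hb
    refine ⟨?_, ?_⟩
    · rw [norm_div, Complex.norm_real, Real.norm_of_nonneg hF.le] at hb
      have hb' : κ.re * Fbar p (1 / θ) ≤ 2 * (1 - Phi p θ).re - ‖1 - Phi p θ‖ ^ 2 := by
        have := mul_le_mul_of_nonneg_right hb.le hF.le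
        refine this.trans (le_of_eq ?_)
        field_simp
      have hid : ‖Phi p θ‖ ^ 2 = 1 - (2 * (1 - Phi p θ).re - ‖1 - Phi p θ‖ ^ 2) := by
        rw [← Complex.normSq_eq_norm_sq, ← Complex.normSq_eq_norm_sq, Complex.normSq_apply,
          Complex.normSq_apply]
        simp only [Complex.sub_re, Complex.one_re, Complex.sub_im, Complex.one_im]
        ring
      have h3 : ‖Phi p θ‖ ^ 2 ≤ Real.exp (-(κ.re / 2 * Fbar p (1 / θ))) ^ 2 := by
        rw [← Real.exp_nat_mul, hid]
        have := Real.add_one_le_exp (((2 : ℕ) : ℝ) * -(κ.re / 2 * Fbar p (1 / θ)))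
        refine le_trans ?_ this
        push_cast
        linarith
      exact (sq_le_sq₀ (norm_nonneg _) (Real.exp_pos _).le).1 h3
    · rw [lt_div_iff₀ hF] at ha
      exact ha.le.trans (Complex.re_le_norm _)
  refine ⟨1 / X, by positivity, κ.re / 2, by positivity, fun θ h0 hθ => ?_⟩
  rcases lt_or_gt_of_ne h0 with hneg | hgt
  · have hn : Phi p θ = (starRingEnd ℂ) (Phi p |θ|) := by
      rw [abs_of_neg hneg, Phi_neg, Complex.conj_conj]
    have h4 : 1 - Phi p θ = (starRingEnd ℂ) (1 - Phi p |θ|) := by rw [hn]; simp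
    rw [h4, hn, Complex.norm_conj, Complex.norm_conj]
    exact key _ (abs_pos.2 h0) hθ
  · rw [abs_of_pos hgt] at hθ ⊢
    exact key θ hgt hθ

/-- The limiting Lévy exponent `ψ(t) = κ t^α` for `t > 0`, extended by `ψ(-t) = conj ψ(t)`. -/
noncomputable def psi (κ : ℂ) (α : ℝ) (t : ℝ) : ℂ :=
  ((|t| ^ α : ℝ) : ℂ) * if 0 < t then κ else (starRingEnd ℂ) κ

lemma psi_re (κ : ℂ) (α t : ℝ) : (psi κ α t).re = |t| ^ α * κ.re := by
  unfold psi
  rw [Complex.re_ofReal_mul]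
  split_ifs <;> simp

lemma norm_psi (κ : ℂ) (α t : ℝ) : ‖psi κ α t‖ = |t| ^ α * ‖κ‖ := by
  unfold psi
  rw [norm_mul, Complex.norm_real, Real.norm_of_nonneg (by positivity)]
  split_ifs <;> simp

lemma psi_scale (κ : ℂ) (α : ℝ) {c : ℝ} (hc : 0 < c) (t : ℝ) :
    psi κ α (c * t) = ((c ^ α : ℝ) : ℂ) * psi κ α t := by
  unfold psi
  rw [abs_mul, abs_of_pos hc, Real.mul_rpow hc.le (abs_nonneg t), Complex.ofReal_mul, mul_assoc]
  simp only [mul_pos_iff_of_pos_left hc]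

lemma measurable_psi (κ : ℂ) (α : ℝ) : Measurable (psi κ α) := by
  unfold psi
  refine Measurable.mul ?_ (Measurable.ite measurableSet_Ioi measurable_const measurable_const)
  fun_prop

/-- Regular variation of `F̄` transfers the limit along `1/x` to the limit along `t/x`, with the
factor `|t|^α`; negative `t` is complex conjugation. -/
lemma Hyp.tendsto_psi (h : Hyp p α) {κ : ℂ}
    (hκ : Tendsto (fun x : ℝ => (1 - Phi p (1 / x)) / (Fbar p x : ℂ)) atTop (𝓝 κ))
    {t : ℝ} (ht : t ≠ 0) :
    Tendsto (fun x : ℝ => (1 - Phi p (t / x)) / (Fbar p x : ℂ)) atTop (𝓝 (psi κ α t)) := by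
  have key : ∀ t : ℝ, 0 < t → Tendsto (fun x : ℝ => (1 - Phi p (t / x)) / (Fbar p x : ℂ)) atTop
      (𝓝 (((t ^ α : ℝ) : ℂ) * κ)) := by
    intro t ht
    have h1 : Tendsto (fun x : ℝ => t⁻¹ * x) atTop atTop :=
      tendsto_id.const_mul_atTop (inv_pos.2 ht)
    have h2 := hκ.comp h1
    have h3 := (Complex.continuous_ofReal.tendsto _).comp (h.reg t⁻¹ (inv_pos.2 ht))
    have h4 := h3.mul h2
    rw [Real.inv_rpow ht.le, Real.rpow_neg ht.le, inv_inv] at h4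
    refine h4.congr' ?_
    filter_upwards with x
    have hF1 : (Fbar p (t⁻¹ * x) : ℂ) ≠ 0 := Complex.ofReal_ne_zero.2 (h.Fbar_pos _).ne'
    have h5 : 1 / (t⁻¹ * x) = t / x := by
      rw [one_div, mul_inv, inv_inv, div_eq_mul_inv]
    simp only [Function.comp_apply, h5]
    rw [Complex.ofReal_div, div_mul_div_comm, mul_comm (Fbar p x : ℂ), mul_div_mul_left _ _ hF1]
  rcases lt_or_gt_of_ne ht with hneg | hgt
  · have h1 := (Complex.continuous_conj.tendsto _).comp (key (-t) (by linarith))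
    have h2 : psi κ α t = (starRingEnd ℂ) ((((-t) ^ α : ℝ) : ℂ) * κ) := by
      rw [psi, abs_of_neg hneg, if_neg (by linarith), map_mul, Complex.conj_ofReal]
    rw [h2]
    refine h1.congr fun x => ?_
    have h3 : Phi p (t / x) = (starRingEnd ℂ) (Phi p (-t / x)) := by
      rw [← Phi_neg]; congr 1; ring
    simp [h3]
  · have := key t hgt
    rwa [psi, abs_of_pos hgt, if_pos hgt]

/-! ### Points of the circle where `|Φ| = 1` -/

/-- Equality case of the triangle inequality: `|E e^{iθX}| = 1` forces `e^{iθX}` to be constant. -/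
lemma Hyp.ex_eq_of_norm_eq_one (h : Hyp p α) {θ : ℝ} (hθ : ‖Phi p θ‖ = 1) {k : ℕ} (hk : p k ≠ 0) :
    ex (k * θ) = Phi p θ := by
  set u := Phi p θ with hu
  have h1 : HasSum (fun k : ℕ => (((p k : ℂ) * ex (k * θ)) * (starRingEnd ℂ) u).re)
      (u * (starRingEnd ℂ) u).re := Complex.hasSum_re ((h.hasSum_Phi θ).mul_right _)
  have h2 : (u * (starRingEnd ℂ) u).re = 1 := by
    rw [Complex.mul_conj, Complex.normSq_eq_norm_sq, hθ]; simp
  rw [h2] at h1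
  have h3 := h.hasSum.sub h1
  rw [sub_self] at h3
  have hre : ∀ k : ℕ, (((p k : ℂ) * ex (k * θ)) * (starRingEnd ℂ) u).re
      = p k * (ex (k * θ) * (starRingEnd ℂ) u).re := by
    intro k; rw [mul_assoc, Complex.re_ofReal_mul]
  have hle : ∀ k : ℕ, (ex (k * θ) * (starRingEnd ℂ) u).re ≤ 1 := by
    intro k
    refine (Complex.re_le_norm _).trans ?_
    rw [norm_mul, norm_ex, Complex.norm_conj, hθ, one_mul]
  have h4 := (hasSum_zero_iff_of_nonneg (fun k => by
    simp only [hre]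
    nlinarith [hle k, h.nonneg k])).1 h3
  have h5 := congrFun h4 k
  simp only [hre, Pi.zero_apply] at h5
  have h6 : (ex (k * θ) * (starRingEnd ℂ) u).re = 1 := by
    have : p k * (1 - (ex (k * θ) * (starRingEnd ℂ) u).re) = 0 := by linarith
    rcases mul_eq_zero.1 this with h7 | h7
    · exact absurd h7 hk
    · linarith
  have h8 : ‖ex (k * θ) - u‖ ^ 2 = 0 := by
    rw [← Complex.normSq_eq_norm_sq, Complex.normSq_sub, Complex.normSq_eq_norm_sq,
      Complex.normSq_eq_norm_sq, norm_ex, hθ, h6]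
    norm_num
  exact sub_eq_zero.1 (norm_eq_zero.1 (pow_eq_zero_iff two_ne_zero |>.1 h8))

lemma ex_eq_one_iff (u : ℝ) : ex u = 1 ↔ ∃ m : ℤ, u = m * (2 * Real.pi) := by
  unfold ex
  rw [Complex.exp_eq_one_iff]
  refine exists_congr fun m => ?_
  constructor
  · intro h
    have h2 : (u : ℂ) * Complex.I = ((m * (2 * Real.pi) : ℝ) : ℂ) * Complex.I := by
      rw [h]; push_cast; ring
    exact_mod_cast mul_right_cancel₀ Complex.I_ne_zero h2
  · intro h; rw [h]; push_cast; ring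

/-- Aperiodicity: `Φ ≠ 1` on `[-π, π] \ {0}`. -/
lemma Hyp.Phi_ne_one (h : Hyp p α) {θ : ℝ} (h0 : θ ≠ 0) (hθ : |θ| ≤ Real.pi) : Phi p θ ≠ 1 := by
  intro h1
  have hex : ∀ k, p k ≠ 0 → ex (k * θ) = 1 := fun k hk => by
    rw [h.ex_eq_of_norm_eq_one (by rw [h1]; simp) hk, h1]
  -- the integers `m` with `e^{imθ} = 1` form a subgroup, hence are the multiples of some `d`
  let G : AddSubgroup ℤ :=
    { carrier := {m : ℤ | ex (m * θ) = 1}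
      zero_mem' := by simp [ex_zero]
      add_mem' := by
        intro a b ha hb
        simp only [Set.mem_ofPred_eq] at *
        rw [Int.cast_add, add_mul, ex_add, ha, hb, one_mul]
      neg_mem' := by
        intro a ha
        simp only [Set.mem_ofPred_eq] at *
        rw [Int.cast_neg, neg_mul, ex_neg, ha, map_one] }
  obtain ⟨d, hd⟩ := Int.subgroup_cyclic G
  rw [← AddSubgroup.zmultiples_eq_closure] at hd
  have hdiv : ∀ k, p k ≠ 0 → d.natAbs ∣ k := by
    intro k hk
    have : (k : ℤ) ∈ G := by
      change ex (((k : ℤ) : ℝ) * θ) = 1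
      exact_mod_cast hex k hk
    rw [hd, Int.mem_zmultiples_iff] at this
    exact Int.natAbs_dvd_natAbs.2 this
  have hd1 := h.aper _ hdiv
  have h1G : (1 : ℤ) ∈ G := by
    rw [hd, Int.mem_zmultiples_iff, ← Int.natAbs_dvd, hd1]
    norm_num
  have h2 : ex (((1 : ℤ) : ℝ) * θ) = 1 := h1G
  rw [Int.cast_one, one_mul, ex_eq_one_iff] at h2
  obtain ⟨m, hm⟩ := h2
  have hpi := Real.pi_pos
  rw [hm, abs_mul, abs_of_pos (show 0 < 2 * Real.pi by positivity)] at hθ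
  have hm0 : m ≠ 0 := by rintro rfl; simp at hm; exact h0 hm
  have : (1 : ℝ) ≤ |(m : ℝ)| := by exact_mod_cast Int.one_le_abs hm0
  nlinarith

/-- The support of `p` has at least two points, so `|Φ| = 1` only on a countable set. -/
lemma Hyp.ae_norm_lt_one (h : Hyp p α) : ∀ᵐ θ : ℝ, ‖Phi p θ‖ < 1 := by
  have hex : ∀ x : ℝ, ∃ k : ℕ, x < k ∧ p k ≠ 0 := by
    intro x
    by_contra! hc
    have : Fbar p x = 0 := by
      unfold Fbar
      refine (tsum_congr (g := fun _ => 0) fun k => ?_).trans tsum_zero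
      split_ifs with hk
      · exact hc k hk
      · rfl
    exact (h.Fbar_pos x).ne' this
  obtain ⟨k, -, hk⟩ := hex 0
  obtain ⟨l, hkl, hl⟩ := hex k
  have hne : (l : ℝ) - k ≠ 0 := by linarith
  have hc : (Set.range fun m : ℤ => (m * (2 * Real.pi)) / ((l : ℝ) - k)).Countable :=
    Set.countable_range _
  filter_upwards [hc.ae_notMem volume] with θ hθ
  refine lt_of_le_of_ne (h.norm_Phi_le θ) fun h1 => hθ ?_
  have h2 : ex (((l : ℝ) - k) * θ) = 1 := by
    rw [sub_mul, sub_eq_add_neg, ex_add, ex_neg, h.ex_eq_of_norm_eq_one h1 hk,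
      h.ex_eq_of_norm_eq_one h1 hl, Complex.mul_conj, Complex.normSq_eq_norm_sq, h1]
    simp
  obtain ⟨m, hm⟩ := (ex_eq_one_iff _).1 h2
  exact ⟨m, by simp only; rw [← hm]; field_simp⟩

/-- Around every point `θ₁` of the circle, `|Φ(θ₁ + s)| ≤ |Φ(s)|` for small `s`: if `|Φ(θ₁)| = 1`
there is equality, and otherwise this follows from continuity since `Φ(0) = 1`. -/
lemma Hyp.eventually_norm_le (h : Hyp p α) (θ₁ : ℝ) :
    ∀ᶠ s in 𝓝 (0 : ℝ), ‖Phi p (θ₁ + s)‖ ≤ ‖Phi p s‖ := by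
  rcases eq_or_lt_of_le (h.norm_Phi_le θ₁) with h1 | h1
  · refine Eventually.of_forall fun s => le_of_eq ?_
    have : Phi p (θ₁ + s) = Phi p θ₁ * Phi p s := by
      conv_lhs => rw [Phi]
      conv_rhs => rw [Phi.eq_def p s, ← tsum_mul_left]
      refine tsum_congr fun k => ?_
      by_cases hk : p k = 0
      · simp [hk]
      · rw [mul_add, ex_add, h.ex_eq_of_norm_eq_one h1 hk]; ring
    rw [this, norm_mul, h1, one_mul]
  · have c1 : ContinuousAt (fun s => ‖Phi p (θ₁ + s)‖) 0 :=
      (h.continuous_Phi.comp (by fun_prop : Continuous fun s : ℝ => θ₁ + s)).norm.continuousAt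
    have c2 : ContinuousAt (fun s => ‖Phi p s‖) 0 := h.continuous_Phi.norm.continuousAt
    have := c1.eventually_lt c2 (by simpa [h.Phi_zero] using h1)
    exact this.mono fun s hs => hs.le

/-! ### Fourier inversion on the circle -/

lemma Hyp.convPow_nonneg (h : Hyp p α) (n x : ℕ) : 0 ≤ convPow p n x := by
  induction n generalizing x with
  | zero => rw [convPow]; split_ifs <;> norm_num
  | succ n ih =>
    rw [convPow]
    exact Finset.sum_nonneg fun y _ => mul_nonneg (ih y) (h.nonneg _)

lemma Hyp.hasSum_convPow (h : Hyp p α) (n : ℕ) :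
    (Summable (convPow p n)) ∧
      ∀ θ : ℝ, HasSum (fun x : ℕ => (convPow p n x : ℂ) * ex (x * θ)) (Phi p θ ^ n) := by
  induction n with
  | zero =>
    constructor
    · refine summable_of_ne_finset_zero (s := {0}) fun x hx => ?_
      simp only [Finset.mem_singleton] at hx
      simp [convPow, hx]
    · intro θ
      rw [pow_zero]
      have := hasSum_ite_eq (0 : ℕ) (1 : ℂ)
      refine this.congr_fun fun x => ?_
      by_cases hx : x = 0
      · simp [convPow, hx, ex_zero]
      · simp [convPow, hx]
  | succ n ih =>
    obtain ⟨ih1, ih2⟩ := ih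
    have hsn : Summable fun x => ‖convPow p n x‖ := ih1.norm
    have hp : Summable fun x => ‖p x‖ := h.hasSum.summable.norm
    constructor
    · have := (summable_norm_sum_mul_range_of_summable_norm hsn hp).of_norm
      refine this.congr fun x => ?_
      simp only [convPow]
    · intro θ
      have a1 : Summable fun x : ℕ => ‖(convPow p n x : ℂ) * ex (x * θ)‖ := by
        refine hsn.congr fun x => ?_
        rw [norm_mul, norm_ex, mul_one, Complex.norm_real]
      have a2 : Summable fun k : ℕ => ‖(p k : ℂ) * ex (k * θ)‖ := by
        simp_rw [h.norm_term]
        exact h.hasSum.summable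
      have a3 := hasSum_sum_range_mul_of_summable_norm a1 a2
      rw [(ih2 θ).tsum_eq, (h.hasSum_Phi θ).tsum_eq, ← pow_succ] at a3
      refine a3.congr_fun fun x => ?_
      simp only [convPow]
      rw [Complex.ofReal_sum, Finset.sum_mul]
      refine Finset.sum_congr rfl fun y hy => ?_
      have hyx : y ≤ x := Nat.lt_succ_iff.1 (Finset.mem_range.1 hy)
      rw [show (x : ℝ) * θ = y * θ + ((x - y : ℕ) : ℝ) * θ by
        rw [Nat.cast_sub hyx]; ring, ex_add]
      push_cast
      ring

lemma integral_ex (m : ℤ) :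
    ∫ θ in (-Real.pi)..Real.pi, ex (m * θ) = if m = 0 then (2 * Real.pi : ℂ) else 0 := by
  split_ifs with hm
  · subst hm
    simp [ex_zero]
    ring
  · have hm' : (m : ℝ) ≠ 0 := by exact_mod_cast hm
    rw [intervalIntegral.integral_comp_mul_left (fun u => ex u) hm']
    have hd : ∀ v : ℝ, HasDerivAt (fun v => ex v / Complex.I) (ex v) v := by
      intro v
      have := (hasDerivAt_ex v).div_const Complex.I
      rwa [mul_div_cancel_right₀ _ Complex.I_ne_zero] at this
    rw [intervalIntegral.integral_eq_sub_of_hasDerivAt (fun v _ => hd v)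
      (continuous_ex.intervalIntegrable _ _)]
    have h1 : ex (m * Real.pi) = ex (m * -Real.pi) := by
      have : ex (m * Real.pi) = ex (m * -Real.pi) * ex (m * (2 * Real.pi)) := by
        rw [← ex_add]; congr 1; ring
      rw [this, (ex_eq_one_iff _).2 ⟨m, rfl⟩, mul_one]
    rw [h1, sub_self, smul_zero]

/-- Fourier coefficients of `Φ^n`. -/
lemma Hyp.integral_pow (h : Hyp p α) (n : ℕ) (m : ℤ) :
    ∫ θ in (-Real.pi)..Real.pi, Phi p θ ^ n * ex (-(m * θ))
      = 2 * Real.pi * ∑' x : ℕ, if (x : ℤ) = m then (convPow p n x : ℂ) else 0 := by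
  obtain ⟨h1, h2⟩ := h.hasSum_convPow n
  have h3 : HasSum (fun x : ℕ => ∫ θ in (-Real.pi)..Real.pi,
      ((convPow p n x : ℂ) * ex (x * θ)) * ex (-(m * θ)))
      (∫ θ in (-Real.pi)..Real.pi, Phi p θ ^ n * ex (-(m * θ))) := by
    refine intervalIntegral.hasSum_integral_of_dominated_convergence
      (fun x _ => convPow p n x) (fun x => ?_) (fun x => ?_) ?_ ?_ ?_
    · have := continuous_ex
      exact Continuous.aestronglyMeasurable (by fun_prop)
    · refine ae_of_all _ fun θ _ => ?_
      rw [norm_mul, norm_mul, norm_ex, norm_ex, mul_one, mul_one, Complex.norm_real,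
        Real.norm_of_nonneg (h.convPow_nonneg n x)]
    · exact ae_of_all _ fun θ _ => h1
    · simp
    · exact ae_of_all _ fun θ _ => (h2 θ).mul_right _
  rw [← h3.tsum_eq, ← tsum_mul_left]
  refine tsum_congr fun x => ?_
  have h4 : ∀ θ : ℝ, ((convPow p n x : ℂ) * ex (x * θ)) * ex (-(m * θ))
      = (convPow p n x : ℂ) * ex (((x - m : ℤ) : ℝ) * θ) := by
    intro θ
    rw [mul_assoc, ← ex_add]
    congr 2
    push_cast
    ring
  simp_rw [h4]
  rw [intervalIntegral.integral_const_mul, integral_ex]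
  by_cases hx : (x : ℤ) = m
  · simp [hx, mul_comm]
  · simp [hx, sub_eq_zero]

lemma integrable_abs {f : ℝ → ℝ} (hf : IntegrableOn f (Set.Ioi 0)) :
    Integrable fun x => f |x| := by
  have hf' : IntegrableOn (fun x => f |x|) (Set.Ioi 0) :=
    hf.congr_fun (fun x hx => by rw [abs_of_pos hx]) measurableSet_Ioi
  have hneg : IntegrableOn (fun x => f |x|) (Set.Iic 0) := by
    rw [← Measure.map_neg_eq_self (volume : Measure ℝ)]
    let m : MeasurableEmbedding fun x : ℝ => -x := (Homeomorph.neg ℝ).measurableEmbedding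
    rw [m.integrableOn_map_iff]
    simp_rw [Function.comp_def, abs_neg, Set.neg_preimage, Set.neg_Iic, neg_zero]
    exact Iff.mpr integrableOn_Ici_iff_integrableOn_Ioi hf'
  have := hneg.union hf'
  rwa [Set.Iic_union_Ioi, integrableOn_univ] at this

/-- Away from the origin `1 - Φ` is bounded below, by aperiodicity and compactness. -/
lemma Hyp.far_bound (h : Hyp p α) {η : ℝ} (hη : 0 < η) :
    ∃ c : ℝ, 0 < c ∧ ∀ θ : ℝ, η ≤ |θ| → |θ| ≤ Real.pi → c ≤ ‖1 - Phi p θ‖ := by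
  have hK : IsCompact {θ : ℝ | η ≤ |θ| ∧ |θ| ≤ Real.pi} := by
    refine Metric.isCompact_of_isClosed_isBounded ?_ ?_
    · exact (isClosed_le continuous_const continuous_abs).inter
        (isClosed_le continuous_abs continuous_const)
    · refine (Metric.isBounded_Icc (-Real.pi) Real.pi).subset fun θ hθ => abs_le.1 hθ.2
  rcases Set.eq_empty_or_nonempty {θ : ℝ | η ≤ |θ| ∧ |θ| ≤ Real.pi} with he | hne
  · exact ⟨1, one_pos, fun θ h1 h2 => absurd (show θ ∈ {θ : ℝ | η ≤ |θ| ∧ |θ| ≤ Real.pi} from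
      ⟨h1, h2⟩) (by rw [he]; exact Set.notMem_empty _)⟩
  · obtain ⟨θ₀, hθ₀, hmin⟩ := hK.exists_isMinOn hne
      (continuous_const.sub h.continuous_Phi).norm.continuousOn
    refine ⟨_, norm_pos_iff.2 (sub_ne_zero.2 (Ne.symm (h.Phi_ne_one ?_ hθ₀.2))),
      fun θ h1 h2 => hmin ⟨h1, h2⟩⟩
    exact abs_pos.1 (hη.trans_le hθ₀.1)

/-- Since `α < 1`, the singularity of `1/(1 - Φ)` at the origin is integrable. -/
lemma Hyp.integrableOn_inv (h : Hyp p α) :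
    IntegrableOn (fun θ => (1 - Phi p θ)⁻¹) (Set.Ioc (-Real.pi) Real.pi) := by
  obtain ⟨κ, hκ⟩ := h.exists_tendsto_one
  obtain ⟨η, hη, c, hc, hnear⟩ := h.near_bounds hκ
  obtain ⟨c', hc', hfar⟩ := h.far_bound hη
  obtain ⟨β, hβ1, hβ2⟩ := exists_between h.lt_one
  obtain ⟨C, hC, hP⟩ := h.potter_upper hβ1
  have hβ0 : 0 < β := h.pos.trans hβ1
  have hFη := h.Fbar_pos (1 / η)
  set K : ℝ := C / (c * (Fbar p (1 / η) * (1 / η) ^ β)) with hK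
  have hK0 : 0 < K := by positivity
  have hmeas : Measurable fun θ => (1 - Phi p θ)⁻¹ :=
    (measurable_const.sub h.continuous_Phi.measurable).inv
  have h_dom : IntegrableOn (fun θ : ℝ => K * |θ| ^ (-β) + c'⁻¹)
      (Set.Ioc (-Real.pi) Real.pi) := by
    have h1 : IntegrableOn (fun θ : ℝ => (Set.Ioc 0 Real.pi).indicator (fun t => t ^ (-β)) θ)
        (Set.Ioi 0) := by
      have := (intervalIntegral.intervalIntegrable_rpow' (a := 0) (b := Real.pi) (r := -β)
        (by linarith))
      have := (intervalIntegrable_iff_integrableOn_Ioc_of_le Real.pi_pos.le).1 this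
      exact (this.integrable_indicator measurableSet_Ioc).integrableOn
    have h2 := (integrable_abs h1).integrableOn (s := Set.Ioc (-Real.pi) Real.pi)
    refine (Integrable.const_mul ?_ K).add (integrableOn_const (by simp))
    refine h2.congr_fun_ae ?_
    refine (ae_restrict_iff' measurableSet_Ioc).2 ?_
    filter_upwards [Measure.ae_ne volume (0 : ℝ)] with θ h0 hθ
    rw [Set.indicator_of_mem]
    exact ⟨abs_pos.2 h0, abs_le.2 ⟨hθ.1.le, hθ.2⟩⟩
  refine h_dom.mono' hmeas.aestronglyMeasurable ((ae_restrict_iff' measurableSet_Ioc).2 ?_)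
  filter_upwards [Measure.ae_ne volume (0 : ℝ)] with θ h0 hθ
  have h0' := abs_pos.2 h0
  rw [norm_inv]
  rcases le_total |θ| η with h1 | h1
  · have h2 := (hnear θ h0 h1).2
    have hF := h.Fbar_pos (1 / |θ|)
    have h3 := hP (1 / η) (1 / |θ|) (by positivity) (one_div_le_one_div_of_le h0' h1)
    have h4 : ‖1 - Phi p θ‖⁻¹ ≤ (c * Fbar p (1 / |θ|))⁻¹ := inv_anti₀ (by positivity) h2
    have h5 : (c * Fbar p (1 / |θ|))⁻¹ ≤ K * |θ| ^ (-β) := by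
      rw [one_div |θ|, Real.inv_rpow h0'.le, ← Real.rpow_neg h0'.le, ← one_div |θ|] at h3
      rw [inv_eq_one_div, div_le_iff₀ (by positivity), hK, div_mul_eq_mul_div, div_mul_eq_mul_div,
        le_div_iff₀ (by positivity)]
      calc _ = c * (Fbar p (1 / η) * (1 / η) ^ β) := by ring
        _ ≤ c * (C * (Fbar p (1 / |θ|) * |θ| ^ (-β))) := by gcongr
        _ = _ := by ring
    have : 0 < c'⁻¹ := by positivity
    linarith
  · have h2 := hfar θ h1 (abs_le.2 ⟨hθ.1.le, hθ.2⟩)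
    have h3 : ‖1 - Phi p θ‖⁻¹ ≤ c'⁻¹ := inv_anti₀ (by positivity) h2
    have : 0 ≤ K * |θ| ^ (-β) := by positivity
    linarith

/-- Summing the geometric series under the integral sign. -/
lemma Hyp.tendsto_sum_integral (h : Hyp p α) (N : ℕ) (m : ℤ) :
    Tendsto (fun M => ∑ n ∈ Finset.range M,
        ∫ θ in (-Real.pi)..Real.pi, Phi p θ ^ (n + N) * ex (-(m * θ))) atTop
      (𝓝 (∫ θ in Set.Ioc (-Real.pi) Real.pi,
        Phi p θ ^ N * (1 - Phi p θ)⁻¹ * ex (-(m * θ)))) := by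
  have hle : -Real.pi ≤ Real.pi := by linarith [Real.pi_pos]
  have hcont : ∀ n, Continuous fun θ => Phi p θ ^ n * ex (-(m * θ)) := fun n =>
    (h.continuous_Phi.pow n).mul (continuous_ex.comp (by fun_prop))
  have h1 : ∀ M, ∑ n ∈ Finset.range M,
        ∫ θ in (-Real.pi)..Real.pi, Phi p θ ^ (n + N) * ex (-(m * θ))
      = ∫ θ in Set.Ioc (-Real.pi) Real.pi,
        (1 - Phi p θ ^ M) * (Phi p θ ^ N * (1 - Phi p θ)⁻¹ * ex (-(m * θ))) := by
    intro M
    rw [← intervalIntegral.integral_finsetSum fun n _ => (hcont _).intervalIntegrable _ _,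
      intervalIntegral.integral_of_le hle]
    refine setIntegral_congr_ae measurableSet_Ioc ?_
    filter_upwards [h.ae_norm_lt_one] with θ hθ _
    have hne : Phi p θ ≠ 1 := by rintro h1; rw [h1] at hθ; simp at hθ
    have hne' : 1 - Phi p θ ≠ 0 := sub_ne_zero.2 hne.symm
    have hg := geom_sum_mul_neg (Phi p θ) M
    rw [← Finset.sum_mul]
    simp_rw [pow_add]
    rw [← Finset.sum_mul, ← hg]
    field_simp
  simp_rw [h1]
  refine tendsto_integral_of_dominated_convergence (fun θ => 2 * ‖(1 - Phi p θ)⁻¹‖) ?_ ?_ ?_ ?_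
  · intro M
    have a1 := h.continuous_Phi.measurable
    have a2 := continuous_ex.measurable
    exact Measurable.aestronglyMeasurable (by fun_prop)
  · exact h.integrableOn_inv.norm.const_mul 2
  · intro M
    refine ae_of_all _ fun θ => ?_
    rw [norm_mul, norm_mul, norm_mul, norm_ex, mul_one, norm_pow]
    have b1 : ‖Phi p θ‖ ^ N ≤ 1 := pow_le_one₀ (norm_nonneg _) (h.norm_Phi_le θ)
    have b2 : ‖1 - Phi p θ ^ M‖ ≤ 2 := by
      refine (norm_sub_le _ _).trans ?_
      rw [norm_one, norm_pow]
      have : ‖Phi p θ‖ ^ M ≤ 1 := pow_le_one₀ (norm_nonneg _) (h.norm_Phi_le θ)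
      linarith
    calc _ ≤ 2 * (1 * ‖(1 - Phi p θ)⁻¹‖) := by gcongr
      _ = _ := by ring
  · filter_upwards [ae_restrict_of_ae h.ae_norm_lt_one] with θ hθ
    have := (tendsto_pow_atTop_nhds_zero_of_norm_lt_one hθ).const_sub 1
    simpa using this.mul_const (Phi p θ ^ N * (1 - Phi p θ)⁻¹ * ex (-(m * θ)))

/-- The circle integral whose value at `m ≥ 0` is `2π Σ_{n ≥ N} P(Sₙ = m)`. -/
noncomputable def tailInt (p : ℕ → ℝ) (N : ℕ) (m : ℤ) : ℂ :=
  ∫ θ in Set.Ioc (-Real.pi) Real.pi, Phi p θ ^ N * (1 - Phi p θ)⁻¹ * ex (-(m * θ))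

lemma Hyp.tailInt_neg (h : Hyp p α) (N : ℕ) {x : ℕ} (hx : 0 < x) : tailInt p N (-(x : ℤ)) = 0 := by
  refine tendsto_nhds_unique (h.tendsto_sum_integral N _) ?_
  have : ∀ n : ℕ, ∫ θ in (-Real.pi)..Real.pi, Phi p θ ^ (n + N) * ex (-((-(x : ℤ) : ℤ) * θ))
      = 0 := by
    intro n
    rw [h.integral_pow]
    have : ∀ y : ℕ, ¬ ((y : ℤ) = -(x : ℤ)) := by intro y; omega
    simp [this]
  simp_rw [this]
  simp

/-- Fourier inversion for the tail sum, together with its summability. -/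
lemma Hyp.tsum_tail (h : Hyp p α) (N x : ℕ) :
    (Summable fun n : ℕ => if N ≤ n then convPow p n x else 0) ∧
    ((∑' n : ℕ, if N ≤ n then convPow p n x else 0 : ℝ) : ℂ)
      = (2 * Real.pi : ℂ)⁻¹ * tailInt p N x := by
  have hpi : (2 * Real.pi : ℂ) ≠ 0 := by
    have := Real.pi_ne_zero
    exact mul_ne_zero two_ne_zero (Complex.ofReal_ne_zero.2 this)
  have h1 := (h.tendsto_sum_integral N x).const_mul (2 * Real.pi : ℂ)⁻¹
  have h2 : ∀ n : ℕ, ∫ θ in (-Real.pi)..Real.pi, Phi p θ ^ (n + N) * ex (-((x : ℤ) * θ))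
      = 2 * Real.pi * convPow p (n + N) x := by
    intro n
    rw [h.integral_pow, tsum_eq_single x]
    · simp
    · intro y hy
      rw [if_neg (by exact_mod_cast hy)]
  simp_rw [h2, ← Finset.mul_sum, inv_mul_cancel_left₀ hpi] at h1
  have h3 : HasSum (fun n => convPow p (n + N) x) ((2 * Real.pi : ℂ)⁻¹ * tailInt p N x).re := by
    rw [hasSum_iff_tendsto_nat_of_nonneg fun n => h.convPow_nonneg _ _]
    have := (Complex.continuous_re.tendsto _).comp h1
    refine this.congr fun M => ?_
    simp [← Complex.ofReal_sum]
  have h4 : ((((2 * Real.pi : ℂ)⁻¹ * tailInt p N x).re : ℝ) : ℂ)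
      = (2 * Real.pi : ℂ)⁻¹ * tailInt p N x :=
    tendsto_nhds_unique (Complex.hasSum_ofReal.2 h3).tendsto_sum_nat h1
  have h5 : HasSum (fun n => if N ≤ n then convPow p n x else 0)
      ((2 * Real.pi : ℂ)⁻¹ * tailInt p N x).re := by
    rw [← (add_left_injective N).hasSum_iff]
    · refine h3.congr_fun fun n => ?_
      simp
    · intro n hn
      rw [if_neg]
      intro hle
      exact hn ⟨n - N, Nat.sub_add_cancel hle⟩
  exact ⟨h5.summable, by rw [h5.tsum_eq, h4]⟩

/-! ### The local limit theorem for the tail sum -/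

lemma tendsto_one_add_pow_exp {ι : Type*} {l : Filter ι} {z : ι → ℂ} {N : ι → ℕ} {w : ℂ}
    (hz : Tendsto z l (𝓝 0)) (hN : Tendsto (fun i => (N i : ℂ) * z i) l (𝓝 w)) :
    Tendsto (fun i => (1 + z i) ^ N i) l (𝓝 (Complex.exp w)) := by
  have h1 : Tendsto (fun i => (N i : ℂ) * Complex.log (1 + z i)) l (𝓝 w) := by
    have h2 : Tendsto (fun i => ‖(N i : ℂ) * z i‖ * ‖z i‖) l (𝓝 0) := by
      simpa using hN.norm.mul hz.norm
    have h3 : Tendsto (fun i => (N i : ℂ) * Complex.log (1 + z i) - N i * z i) l (𝓝 0) := by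
      refine squeeze_zero_norm' ?_ h2
      have hz' : Tendsto (fun i => ‖z i‖) l (𝓝 0) := by simpa using hz.norm
      filter_upwards [hz'.eventually (gt_mem_nhds (show (0 : ℝ) < 1 / 2 by norm_num))] with i hi
      rw [← mul_sub, norm_mul, norm_mul, mul_assoc]
      gcongr
      have := Complex.norm_log_one_add_sub_self_le (z := z i) (by linarith)
      refine this.trans ?_
      have h4 : (1 - ‖z i‖)⁻¹ ≤ 2 := by
        rw [inv_le_comm₀ (by linarith) two_pos]; linarith
      nlinarith [sq_nonneg ‖z i‖, norm_nonneg (z i)]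
    simpa using h3.add hN
  refine ((Complex.continuous_exp.tendsto _).comp h1).congr' ?_
  have hz' : Tendsto (fun i => 1 + z i) l (𝓝 1) := by simpa using hz.const_add 1
  filter_upwards [hz'.eventually_ne one_ne_zero] with i hi
  rw [Function.comp_apply, Complex.exp_nat_mul, Complex.exp_log hi]

/-- Bounds for the two factors of the rescaled integrand, uniform in `x` and in `N ≥ δ A(x)`: the
near-origin estimates compare them with `F̄(x/|t|) / F̄(x)`, which Potter's bounds control by powers
of `|t|`. -/
lemma Hyp.near_dom (h : Hyp p α) {δ : ℝ} (hδ : 0 < δ) :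
    ∃ η : ℝ, 0 < η ∧ η ≤ 1 ∧ ∃ b : ℝ, 0 < b ∧ ∃ γ : ℝ, 0 < γ ∧ ∃ β : ℝ, 0 < β ∧ β < 1 ∧
      ∃ K : ℝ, 0 < K ∧ ∀ x : ℝ, 0 < x → ∀ N : ℕ, δ * (1 / Fbar p x) ≤ N →
        ∀ t : ℝ, t ≠ 0 → |t / x| ≤ η →
          ‖Phi p (t / x)‖ ^ N ≤ K * Real.exp (-b * |t| ^ γ) ∧
          Fbar p x * ‖(1 - Phi p (t / x))⁻¹‖ ≤ K * (|t| ^ (-β) + 1) := by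
  obtain ⟨κ, hκ⟩ := h.exists_tendsto_one
  obtain ⟨η₀, hη₀, c, hc, hnear⟩ := h.near_bounds hκ
  obtain ⟨β, hβ1, hβ2⟩ := exists_between h.lt_one
  obtain ⟨C, hC, hP⟩ := h.potter_upper hβ1
  have hγ0 : 0 < α / 2 := half_pos h.pos
  set η := min η₀ 1 with hη
  have hη0 : 0 < η := lt_min hη₀ one_pos
  obtain ⟨C₂, hC₂, hP₂⟩ := h.potter_lower hγ0 (half_lt_self h.pos) (y0 := 1 / η) (by positivity)
  set b := c * δ / C₂ with hb
  have hb0 : 0 < b := by positivity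
  refine ⟨η, hη0, min_le_right _ _, b, hb0, α / 2, hγ0, β, h.pos.trans hβ1, hβ2,
    Real.exp b + (1 / c) * (C + 1), by positivity, ?_⟩
  intro x hx N hN t ht htη
  have ht' : 0 < |t| := abs_pos.2 ht
  have habs : |t / x| = |t| / x := by rw [abs_div, abs_of_pos hx]
  have h1 : 1 / |t / x| = x / |t| := by rw [habs, one_div_div]
  have hne : t / x ≠ 0 := div_ne_zero ht hx.ne'
  obtain ⟨hb1, hb2⟩ := hnear (t / x) hne (htη.trans (min_le_left _ _))
  rw [h1] at hb1 hb2
  have hFx := h.Fbar_pos x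
  have hFy := h.Fbar_pos (x / |t|)
  constructor
  · refine le_trans ?_ (mul_le_mul_of_nonneg_right
      (le_add_of_nonneg_right (a := Real.exp b) (by positivity)) (Real.exp_pos _).le)
    rcases le_total |t| 1 with ht1 | ht1
    · calc ‖Phi p (t / x)‖ ^ N ≤ 1 := pow_le_one₀ (norm_nonneg _) (h.norm_Phi_le _)
        _ ≤ Real.exp (b + -b * |t| ^ (α / 2)) := by
          refine Real.one_le_exp ?_
          have : |t| ^ (α / 2) ≤ 1 := Real.rpow_le_one ht'.le ht1 hγ0.le
          nlinarith
        _ = _ := Real.exp_add _ _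
    · have h2 : 1 / η ≤ x / |t| := by
        rw [habs, div_le_iff₀ hx] at htη
        rw [div_le_div_iff₀ hη0 ht']; linarith
      have h3 := hP₂ (x / |t|) x h2 (div_le_self hx.le ht1)
      rw [Real.div_rpow hx.le ht'.le] at h3
      have hxγ : 0 < x ^ (α / 2) := by positivity
      have htγ : 0 < |t| ^ (α / 2) := by positivity
      have h4 : Fbar p x * |t| ^ (α / 2) ≤ C₂ * Fbar p (x / |t|) := by
        refine le_of_mul_le_mul_right ?_ hxγ
        calc Fbar p x * |t| ^ (α / 2) * x ^ (α / 2)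
            = (Fbar p x * x ^ (α / 2)) * |t| ^ (α / 2) := by ring
          _ ≤ (C₂ * (Fbar p (x / |t|) * (x ^ (α / 2) / |t| ^ (α / 2)))) * |t| ^ (α / 2) := by
            gcongr
          _ = _ := by field_simp
      have h5 : b * |t| ^ (α / 2) ≤ N * (c * Fbar p (x / |t|)) := by
        calc b * |t| ^ (α / 2) = (c * δ / (C₂ * Fbar p x)) * (Fbar p x * |t| ^ (α / 2)) := by
              rw [hb]; field_simp
          _ ≤ (c * δ / (C₂ * Fbar p x)) * (C₂ * Fbar p (x / |t|)) := by gcongr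
          _ = (δ * (1 / Fbar p x)) * (c * Fbar p (x / |t|)) := by field_simp
          _ ≤ _ := by gcongr
      calc ‖Phi p (t / x)‖ ^ N ≤ Real.exp (-(c * Fbar p (x / |t|))) ^ N := by gcongr
        _ = Real.exp (N * (-(c * Fbar p (x / |t|)))) := (Real.exp_nat_mul _ _).symm
        _ ≤ Real.exp (-b * |t| ^ (α / 2)) := by
          refine Real.exp_le_exp.2 ?_
          linarith
        _ ≤ Real.exp b * Real.exp (-b * |t| ^ (α / 2)) :=
          le_mul_of_one_le_left (Real.exp_pos _).le (Real.one_le_exp hb0.le)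
  · have hpos : 0 < ‖1 - Phi p (t / x)‖ := lt_of_lt_of_le (by positivity) hb2
    have h2 : Fbar p x * ‖(1 - Phi p (t / x))⁻¹‖ ≤ (1 / c) * (Fbar p x / Fbar p (x / |t|)) := by
      rw [norm_inv]
      calc _ ≤ Fbar p x * (c * Fbar p (x / |t|))⁻¹ := by gcongr
        _ = _ := by field_simp
    have h3 : Fbar p x / Fbar p (x / |t|) ≤ (C + 1) * (|t| ^ (-β) + 1) := by
      have htβ : 0 < |t| ^ (-β) := by positivity
      rcases le_total |t| 1 with ht1 | ht1
      · have h4 := hP x (x / |t|) hx (le_div_self hx.le ht' ht1)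
        rw [Real.div_rpow hx.le ht'.le, div_eq_mul_inv (x ^ β), ← Real.rpow_neg ht'.le] at h4
        have hxβ : 0 < x ^ β := by positivity
        have h5 : Fbar p x ≤ C * |t| ^ (-β) * Fbar p (x / |t|) := by
          refine le_of_mul_le_mul_right ?_ hxβ
          linarith
        rw [div_le_iff₀ hFy]
        refine h5.trans ?_
        gcongr
        all_goals linarith
      · have : Fbar p x / Fbar p (x / |t|) ≤ 1 := by
          rw [div_le_one hFy]
          exact h.antitone (div_le_self hx.le ht1)
        nlinarith [mul_pos hC htβ]
    calc _ ≤ (1 / c) * (Fbar p x / Fbar p (x / |t|)) := h2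
      _ ≤ (1 / c) * ((C + 1) * (|t| ^ (-β) + 1)) := by gcongr
      _ = (1 / c) * (C + 1) * (|t| ^ (-β) + 1) := by ring
      _ ≤ _ := by
        gcongr
        have := Real.exp_pos b
        linarith

lemma integrable_exp_abs {b γ : ℝ} (hb : 0 < b) (hγ : 0 < γ) :
    Integrable fun t : ℝ => Real.exp (-b * |t| ^ γ) := by
  have := integrable_abs (integrableOn_rpow_mul_exp_neg_mul_rpow (s := 0) (by norm_num) hγ hb)
  simpa using this

lemma integrable_rpow_exp_abs {b γ β : ℝ} (hb : 0 < b) (hγ : 0 < γ) (hβ : β < 1) :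
    Integrable fun t : ℝ => |t| ^ (-β) * Real.exp (-b * |t| ^ γ) :=
  integrable_abs (integrableOn_rpow_mul_exp_neg_mul_rpow (s := -β) (by linarith) hγ hb)

/-- `∫ |Φ|^N = O(1/x)` over compact sets when `N ≥ δ/F̄(x)`. Near the origin this is the bound of
`near_dom`; near any other point `θ₁` the comparison `|Φ(θ₁ + s)| ≤ |Φ(s)|` reduces it to that
case (`|Φ(θ₁)| = 1` is possible even though `p` is aperiodic in the renewal sense). -/
lemma Hyp.lintegral_norm_pow (h : Hyp p α) {δ : ℝ} (hδ : 0 < δ) {S : Set ℝ} (hS : IsCompact S) :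
    ∃ B : ℝ, 0 ≤ B ∧ ∀ x : ℝ, 0 < x → ∀ N : ℕ, δ * (1 / Fbar p x) ≤ N →
      ∫⁻ θ in S, ENNReal.ofReal (‖Phi p θ‖ ^ N) ≤ ENNReal.ofReal (B / x) := by
  obtain ⟨η, hη, -, b, hb, γ, hγ, β, -, -, K, hK, hdom⟩ := h.near_dom hδ
  have hEint := (integrable_exp_abs hb hγ).const_mul K
  have hmeasN : ∀ N : ℕ, Measurable fun θ => ENNReal.ofReal (‖Phi p θ‖ ^ N) := fun N =>
    (h.continuous_Phi.measurable.norm.pow_const N).ennreal_ofReal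
  have hnear : ∃ B : ℝ, 0 ≤ B ∧ ∀ x : ℝ, 0 < x → ∀ N : ℕ, δ * (1 / Fbar p x) ≤ N →
      ∫⁻ θ, (Set.Icc (-η) η).indicator (fun θ => ENNReal.ofReal (‖Phi p θ‖ ^ N)) θ
        ≤ ENNReal.ofReal (B / x) := by
    refine ⟨∫ t, K * Real.exp (-b * |t| ^ γ), integral_nonneg fun t => by positivity, ?_⟩
    intro x hx N hN
    have hle : ∀ᵐ θ : ℝ, (Set.Icc (-η) η).indicator (fun θ => ENNReal.ofReal (‖Phi p θ‖ ^ N)) θ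
        ≤ ENNReal.ofReal (K * Real.exp (-b * |θ * x| ^ γ)) := by
      filter_upwards [Measure.ae_ne volume (0 : ℝ)] with θ h0
      by_cases hθ : θ ∈ Set.Icc (-η) η
      · rw [Set.indicator_of_mem hθ]
        have := (hdom x hx N hN (θ * x) (mul_ne_zero h0 hx.ne')
          (by rw [mul_div_cancel_right₀ _ hx.ne']; exact abs_le.2 hθ)).1
        rw [mul_div_cancel_right₀ _ hx.ne'] at this
        exact ENNReal.ofReal_le_ofReal this
      · rw [Set.indicator_of_notMem hθ]; exact zero_le
    refine (lintegral_mono_ae hle).trans ?_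
    have hi : Integrable fun θ : ℝ => K * Real.exp (-b * |θ * x| ^ γ) :=
      hEint.comp_mul_right' hx.ne'
    rw [← ofReal_integral_eq_lintegral_ofReal hi (ae_of_all _ fun t => by positivity)]
    refine ENNReal.ofReal_le_ofReal (le_of_eq ?_)
    have := Measure.integral_comp_mul_right (fun t : ℝ => K * Real.exp (-b * |t| ^ γ)) x
    rw [this, abs_of_pos (inv_pos.2 hx), smul_eq_mul, div_eq_inv_mul]
  obtain ⟨B₀, hB₀, hB⟩ := hnear
  refine hS.induction_on ⟨0, le_rfl, fun x hx N hN => by simp⟩ ?_ ?_ ?_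
  · rintro s t hst ⟨B, hB0, hB⟩
    exact ⟨B, hB0, fun x hx N hN => (lintegral_mono_set hst).trans (hB x hx N hN)⟩
  · rintro s t ⟨B, hB0, hB⟩ ⟨B', hB0', hB'⟩
    refine ⟨B + B', by positivity, fun x hx N hN => ?_⟩
    refine (lintegral_union_le _ _ _).trans ?_
    rw [add_div, ENNReal.ofReal_add (by positivity) (by positivity)]
    exact add_le_add (hB x hx N hN) (hB' x hx N hN)
  · intro θ₁ _
    obtain ⟨ε, hε, hball⟩ := Metric.eventually_nhds_iff_ball.1 (h.eventually_norm_le θ₁)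
    refine ⟨Metric.ball θ₁ (min ε η),
      mem_nhdsWithin_of_mem_nhds (Metric.ball_mem_nhds _ (lt_min hε hη)), B₀, hB₀, ?_⟩
    intro x hx N hN
    set g : ℝ → ENNReal := (Set.Icc (-η) η).indicator (fun θ => ENNReal.ofReal (‖Phi p θ‖ ^ N))
    calc ∫⁻ θ in Metric.ball θ₁ (min ε η), ENNReal.ofReal (‖Phi p θ‖ ^ N)
        ≤ ∫⁻ θ in Metric.ball θ₁ (min ε η), g (θ - θ₁) := by
          refine setLIntegral_mono' Metric.isOpen_ball.measurableSet fun θ hθ => ?_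
          rw [Metric.mem_ball, Real.dist_eq] at hθ
          have h1 := hball (θ - θ₁) (by
            rw [Metric.mem_ball, Real.dist_eq, sub_zero]; exact hθ.trans_le (min_le_left _ _))
          rw [add_sub_cancel] at h1
          have h2 : θ - θ₁ ∈ Set.Icc (-η) η := abs_le.1 (hθ.le.trans (min_le_right _ _))
          simp only [g]
          rw [Set.indicator_of_mem h2]
          exact ENNReal.ofReal_le_ofReal (by gcongr)
      _ ≤ ∫⁻ θ, g (θ - θ₁) := setLIntegral_le_lintegral _ _
      _ = ∫⁻ θ, g θ := lintegral_sub_right_eq_self g θ₁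
      _ ≤ _ := hB x hx N hN

/-- The Fourier transform `exp (-δ ψ) / ψ = ∫_δ^∞ exp (-s ψ) ds` of the function `∫_δ^∞ g_s ds`, where
`g_s` is the stable density with characteristic function `exp (-s ψ)`. The value at `t = 0` is the
junk value `0`. -/
noncomputable def kern (κ : ℂ) (α δ t : ℝ) : ℂ :=
  Complex.exp (-(δ : ℂ) * psi κ α t) * (psi κ α t)⁻¹

/-- The Fourier integral of `kern`; up to the factor `1 / (2π)` this is the limiting density
`∫_δ^∞ g_s(y) ds`. -/
noncomputable def dens (κ : ℂ) (α δ y : ℝ) : ℂ := ∫ t : ℝ, kern κ α δ t * ex (-(y * t))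

/-- The first integer `n` with `n > δ A(x)`. -/
noncomputable def firstN (p : ℕ → ℝ) (δ : ℝ) (x : ℕ) : ℕ := ⌊δ * (1 / Fbar p x)⌋₊ + 1

lemma lt_firstN (p : ℕ → ℝ) (δ : ℝ) (x : ℕ) : δ * (1 / Fbar p x) < firstN p δ x := by
  have := Nat.lt_floor_add_one (δ * (1 / Fbar p x))
  unfold firstN
  push_cast
  exact this

lemma firstN_le_iff (h : Hyp p α) {δ : ℝ} (hδ : 0 < δ) (x n : ℕ) :
    firstN p δ x ≤ n ↔ δ * (1 / Fbar p x) < n := by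
  have := h.Fbar_pos x
  unfold firstN
  rw [Nat.succ_le_iff, Nat.floor_lt (by positivity)]

lemma Hyp.firstN_mul_tendsto (h : Hyp p α) {δ : ℝ} (hδ : 0 < δ) :
    Tendsto (fun x : ℕ => (firstN p δ x : ℝ) * Fbar p x) atTop (𝓝 δ) := by
  have hF : Tendsto (fun x : ℕ => Fbar p x) atTop (𝓝 0) :=
    h.Fbar_tendsto.comp tendsto_natCast_atTop_atTop
  have hup : Tendsto (fun x : ℕ => δ + Fbar p x) atTop (𝓝 δ) := by simpa using hF.const_add δ
  refine tendsto_of_tendsto_of_tendsto_of_le_of_le tendsto_const_nhds hup ?_ ?_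
  · intro x
    have hx := h.Fbar_pos x
    have := (lt_firstN p δ x).le
    calc δ = δ * (1 / Fbar p x) * Fbar p x := by field_simp
      _ ≤ _ := mul_le_mul_of_nonneg_right this hx.le
  · intro x
    have hx := h.Fbar_pos x
    have := Nat.floor_le (show 0 ≤ δ * (1 / Fbar p x) by positivity)
    calc (firstN p δ x : ℝ) * Fbar p x ≤ (δ * (1 / Fbar p x) + 1) * Fbar p x := by
          unfold firstN
          push_cast
          gcongr
      _ = δ + Fbar p x := by field_simp

/-- Pointwise limit of the rescaled integrand: `Φ(t/x)^N → exp (-δ ψ(t))` because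
`N F̄(x) → δ` and `(1 - Φ(t/x)) / F̄(x) → ψ(t)`. -/
lemma Hyp.tendsto_integrand (h : Hyp p α) {κ : ℂ}
    (hκ : Tendsto (fun x : ℝ => (1 - Phi p (1 / x)) / (Fbar p x : ℂ)) atTop (𝓝 κ))
    {δ : ℝ} (hδ : 0 < δ) {t : ℝ} (ht : t ≠ 0) :
    Tendsto (fun x : ℕ => (Fbar p x : ℂ) *
      (Phi p (t / x) ^ firstN p δ x * (1 - Phi p (t / x))⁻¹)) atTop (𝓝 (kern κ α δ t)) := by
  have h1 : Tendsto (fun x : ℕ => (1 - Phi p (t / x)) / (Fbar p x : ℂ)) atTop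
      (𝓝 (psi κ α t)) := (h.tendsto_psi hκ ht).comp tendsto_natCast_atTop_atTop
  have hκr := h.kappa_re_pos hκ
  have hne : psi κ α t ≠ 0 := by
    intro h0
    have := psi_re κ α t
    rw [h0, Complex.zero_re] at this
    have : 0 < |t| ^ α * κ.re := mul_pos (Real.rpow_pos_of_pos (abs_pos.2 ht) _) hκr
    linarith
  have hz : Tendsto (fun x : ℕ => -(1 - Phi p (t / x))) atTop (𝓝 0) := by
    have hc : Tendsto (fun x : ℕ => t / (x : ℝ)) atTop (𝓝 0) :=
      tendsto_const_div_atTop_nhds_zero_nat t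
    have := ((h.continuous_Phi.tendsto 0).comp hc).const_sub 1
    rw [h.Phi_zero, sub_self] at this
    simpa using this.neg
  have hNF : Tendsto (fun x : ℕ => (((firstN p δ x : ℝ) * Fbar p x : ℝ) : ℂ)) atTop (𝓝 (δ : ℂ)) :=
    (Complex.continuous_ofReal.tendsto _).comp (h.firstN_mul_tendsto hδ)
  have hN : Tendsto (fun x : ℕ => (firstN p δ x : ℂ) * -(1 - Phi p (t / x))) atTop
      (𝓝 (-(δ : ℂ) * psi κ α t)) := by
    refine (hNF.neg.mul h1).congr fun x => ?_
    have : (Fbar p x : ℂ) ≠ 0 := by exact_mod_cast (h.Fbar_pos x).ne'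
    push_cast
    field_simp
  have hp := tendsto_one_add_pow_exp hz hN
  refine (hp.mul (h1.inv₀ hne)).congr fun x => ?_
  rw [inv_div]
  have : (1 : ℂ) + -(1 - Phi p (t / x)) = Phi p (t / x) := by ring
  rw [this, div_eq_mul_inv]
  ring

/-- The local limit theorem for the sum over `n > δ A(x)`. On `|θ| ≤ η` the substitution `θ = t/x`
and dominated convergence give the Fourier integral `dens`; on the rest of the circle `1 - Φ` is
bounded away from `0` and the integral of `|Φ|^N` is `O(1/x)`, which the factor `x F̄(x)` kills.
Only `σ = ±1` is needed: `σ = 1` for the sum itself and `σ = -1` to see that the limiting density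
vanishes on the negative half-line. -/
lemma Hyp.tendsto_tailInt (h : Hyp p α) {κ : ℂ}
    (hκ : Tendsto (fun x : ℝ => (1 - Phi p (1 / x)) / (Fbar p x : ℂ)) atTop (𝓝 κ))
    {δ : ℝ} (hδ : 0 < δ) (σ : ℤ) :
    Tendsto (fun x : ℕ => (((x : ℝ) * Fbar p x : ℝ) : ℂ) * tailInt p (firstN p δ x) (σ * x)) atTop
      (𝓝 (dens κ α δ σ)) := by
  obtain ⟨η, hη, hη1, b, hb, γ, hγ, β, hβ0, hβ, K, hK, hdom⟩ := h.near_dom hδ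
  obtain ⟨c, hc, hfar⟩ := h.far_bound hη
  obtain ⟨B, hB0, hB⟩ := h.lintegral_norm_pow hδ (S := Set.Icc (-Real.pi) Real.pi) isCompact_Icc
  have hpi := Real.pi_gt_three
  set G : ℕ → ℝ → ℂ := fun x θ =>
    Phi p θ ^ firstN p δ x * (1 - Phi p θ)⁻¹ * ex (-(((σ * x : ℤ) : ℝ) * θ)) with hG
  have hGm : ∀ x, Measurable (G x) := by
    intro x
    have h1 := h.continuous_Phi.measurable
    exact ((h1.pow_const _).mul (h1.const_sub 1).inv).mul
      (continuous_ex.measurable.comp (measurable_id.const_mul _).neg)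
  have hGi : ∀ x, IntegrableOn (G x) (Set.Ioc (-Real.pi) Real.pi) := by
    intro x
    refine (h.integrableOn_inv).norm.mono' (hGm x).aestronglyMeasurable (ae_of_all _ fun θ => ?_)
    simp only [hG, norm_mul, norm_ex, mul_one, norm_pow]
    exact mul_le_of_le_one_left (norm_nonneg _) (pow_le_one₀ (norm_nonneg _) (h.norm_Phi_le _))
  have hsub : Set.Ioc (-Real.pi) Real.pi ∩ Set.Icc (-η) η = Set.Icc (-η) η :=
    Set.inter_eq_right.2 fun θ hθ => ⟨by linarith [hθ.1], by linarith [hθ.2]⟩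
  have hsplit : ∀ x, tailInt p (firstN p δ x) (σ * x) = (∫ θ in Set.Icc (-η) η, G x θ) +
      ∫ θ in Set.Ioc (-Real.pi) Real.pi \ Set.Icc (-η) η, G x θ := by
    intro x
    have := integral_inter_add_sdiff (μ := volume) (t := Set.Icc (-η) η) measurableSet_Icc (hGi x)
    rw [hsub] at this
    rw [this]
    rfl
  have hfarlim : Tendsto (fun x : ℕ => (((x : ℝ) * Fbar p x : ℝ) : ℂ) *
      ∫ θ in Set.Ioc (-Real.pi) Real.pi \ Set.Icc (-η) η, G x θ) atTop (𝓝 0) := by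
    have hF : Tendsto (fun x : ℕ => Fbar p x * (c⁻¹ * B)) atTop (𝓝 0) := by
      simpa using (h.Fbar_tendsto.comp tendsto_natCast_atTop_atTop).mul_const (c⁻¹ * B)
    refine squeeze_zero_norm' ?_ hF
    filter_upwards [eventually_gt_atTop 0] with x hx
    have hx' : (0 : ℝ) < x := by exact_mod_cast hx
    have hFx := h.Fbar_pos x
    have hle : ‖∫ θ in Set.Ioc (-Real.pi) Real.pi \ Set.Icc (-η) η, G x θ‖ ≤ c⁻¹ * (B / x) := by
      refine (norm_integral_le_lintegral_norm _).trans ?_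
      refine ENNReal.toReal_le_of_le_ofReal (by positivity) ?_
      calc ∫⁻ θ in Set.Ioc (-Real.pi) Real.pi \ Set.Icc (-η) η, ENNReal.ofReal ‖G x θ‖
          ≤ ∫⁻ θ in Set.Ioc (-Real.pi) Real.pi \ Set.Icc (-η) η,
              ENNReal.ofReal c⁻¹ * ENNReal.ofReal (‖Phi p θ‖ ^ firstN p δ x) := by
            refine setLIntegral_mono' (measurableSet_Ioc.diff measurableSet_Icc) fun θ hθ => ?_
            rw [← ENNReal.ofReal_mul (by positivity)]
            refine ENNReal.ofReal_le_ofReal ?_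
            have h1 : η ≤ |θ| := by
              by_contra! hlt
              exact hθ.2 (abs_le.1 hlt.le)
            have h2 : |θ| ≤ Real.pi := abs_le.2 ⟨hθ.1.1.le, hθ.1.2⟩
            have h3 := hfar θ h1 h2
            simp only [hG, norm_mul, norm_ex, mul_one, norm_pow, norm_inv]
            rw [mul_comm]
            gcongr
        _ = ENNReal.ofReal c⁻¹ * ∫⁻ θ in Set.Ioc (-Real.pi) Real.pi \ Set.Icc (-η) η,
              ENNReal.ofReal (‖Phi p θ‖ ^ firstN p δ x) :=
            lintegral_const_mul' _ _ ENNReal.ofReal_ne_top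
        _ ≤ ENNReal.ofReal c⁻¹ * ∫⁻ θ in Set.Icc (-Real.pi) Real.pi,
              ENNReal.ofReal (‖Phi p θ‖ ^ firstN p δ x) := by
            gcongr
            exact Set.sdiff_subset.trans Set.Ioc_subset_Icc_self
        _ ≤ ENNReal.ofReal c⁻¹ * ENNReal.ofReal (B / x) := by
            gcongr
            exact hB x hx' _ (lt_firstN p δ x).le
        _ = _ := (ENNReal.ofReal_mul (by positivity)).symm
    rw [norm_mul, Complex.norm_real, Real.norm_eq_abs, abs_of_pos (by positivity)]
    calc _ ≤ (x : ℝ) * Fbar p x * (c⁻¹ * (B / x)) := by gcongr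
      _ = _ := by field_simp
  have hnearlim : Tendsto (fun x : ℕ => (((x : ℝ) * Fbar p x : ℝ) : ℂ) *
      ∫ θ in Set.Icc (-η) η, G x θ) atTop (𝓝 (dens κ α δ σ)) := by
    set g : ℕ → ℝ → ℂ := fun x => (Set.Icc (-η) η).indicator
      (fun θ => (Fbar p x : ℂ) * G x θ) with hg
    have hgm : ∀ x, Measurable (g x) := fun x =>
      ((hGm x).const_mul _).indicator measurableSet_Icc
    have hD : Tendsto (fun x : ℕ => ∫ t, g x (t / x)) atTop (𝓝 (dens κ α δ σ)) := by
      refine tendsto_integral_filter_of_dominated_convergence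
        (fun t => K * K * (|t| ^ (-β) * Real.exp (-b * |t| ^ γ) + Real.exp (-b * |t| ^ γ)))
        (Eventually.of_forall fun x =>
          ((hgm x).comp (measurable_id.div_const _)).aestronglyMeasurable) ?_
        (((integrable_rpow_exp_abs hb hγ hβ).add (integrable_exp_abs hb hγ)).const_mul _) ?_
      · filter_upwards [eventually_gt_atTop 0] with x hx
        have hx' : (0 : ℝ) < x := by exact_mod_cast hx
        have hFx := h.Fbar_pos x
        filter_upwards [Measure.ae_ne volume (0 : ℝ)] with t ht
        by_cases hmem : t / x ∈ Set.Icc (-η) η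
        · simp only [hg]
          rw [Set.indicator_of_mem hmem]
          obtain ⟨h1, h2⟩ := hdom x hx' _ (lt_firstN p δ x).le t ht (abs_le.2 hmem)
          simp only [hG, norm_mul, norm_ex, mul_one, norm_pow, Complex.norm_real,
            Real.norm_eq_abs, abs_of_pos hFx]
          calc Fbar p x * (‖Phi p (t / x)‖ ^ firstN p δ x * ‖(1 - Phi p (t / x))⁻¹‖)
              = ‖Phi p (t / x)‖ ^ firstN p δ x * (Fbar p x * ‖(1 - Phi p (t / x))⁻¹‖) := by ring
            _ ≤ (K * Real.exp (-b * |t| ^ γ)) * (K * (|t| ^ (-β) + 1)) := by gcongr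
            _ = _ := by ring
        · simp only [hg]
          rw [Set.indicator_of_notMem hmem, norm_zero]
          positivity
      · filter_upwards [Measure.ae_ne volume (0 : ℝ)] with t ht
        refine ((h.tendsto_integrand hκ hδ ht).mul_const (ex (-(σ * t)))).congr' ?_
        have hc : Tendsto (fun x : ℕ => t / (x : ℝ)) atTop (𝓝 0) :=
          tendsto_const_div_atTop_nhds_zero_nat t
        filter_upwards [eventually_gt_atTop 0, hc.eventually (Icc_mem_nhds (neg_lt_zero.2 hη) hη)]
          with x hx hmem
        have hx' : (x : ℝ) ≠ 0 := by exact_mod_cast hx.ne'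
        simp only [hg]
        rw [Set.indicator_of_mem (show t / (x : ℝ) ∈ Set.Icc (-η) η from hmem)]
        simp only [hG]
        have : ((σ * x : ℤ) : ℝ) * (t / x) = σ * t := by
          push_cast
          field_simp
        rw [this]
        ring
    refine hD.congr fun x => ?_
    rw [Measure.integral_comp_div (g x) (x : ℝ), abs_of_nonneg (Nat.cast_nonneg x)]
    simp only [hg]
    rw [integral_indicator measurableSet_Icc, integral_const_mul, Complex.real_smul]
    push_cast
    ring
  have := hnearlim.add hfarlim
  rw [add_zero] at this
  refine this.congr fun x => ?_
  rw [hsplit, mul_add]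

/-! ### The limiting density -/

lemma norm_kern (κ : ℂ) (α δ t : ℝ) :
    ‖kern κ α δ t‖ = ‖κ‖⁻¹ * (|t| ^ (-α) * Real.exp (-(δ * κ.re) * |t| ^ α)) := by
  unfold kern
  rw [norm_mul, norm_inv, norm_psi, Complex.norm_exp, Real.rpow_neg (abs_nonneg t), mul_inv,
    ← Complex.ofReal_neg, Complex.re_ofReal_mul, psi_re]
  have : -δ * (|t| ^ α * κ.re) = -(δ * κ.re) * |t| ^ α := by ring
  rw [this]
  ring

lemma measurable_kern (κ : ℂ) (α δ : ℝ) : Measurable (kern κ α δ) := by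
  unfold kern
  exact ((measurable_psi κ α).const_mul _).cexp.mul (measurable_psi κ α).inv

lemma integrable_kern {κ : ℂ} (hκ : 0 < κ.re) (h0 : 0 < α) (h1 : α < 1) {δ : ℝ} (hδ : 0 < δ) :
    Integrable (kern κ α δ) := by
  refine ((integrable_rpow_exp_abs (mul_pos hδ hκ) h0 h1).const_mul ‖κ‖⁻¹).mono'
    (measurable_kern κ α δ).aestronglyMeasurable (ae_of_all _ fun t => ?_)
  rw [norm_kern]

lemma norm_kern_le {κ : ℂ} (hκ : 0 < κ.re) (α : ℝ) {δ : ℝ} (hδ : 0 < δ) (t : ℝ) :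
    ‖kern κ α δ t‖ ≤ ‖κ‖⁻¹ * |t| ^ (-α) := by
  rw [norm_kern]
  gcongr
  refine mul_le_of_le_one_right (by positivity) (Real.exp_le_one_iff.2 ?_)
  have : 0 ≤ δ * κ.re * |t| ^ α := by positivity
  linarith

/-- Self-similarity of the stable law. -/
lemma dens_scale (κ : ℂ) (α δ s : ℝ) {y : ℝ} (hy : 0 < y) :
    dens κ α δ (y * s) = ((y ^ (α - 1) : ℝ) : ℂ) * dens κ α (δ * y ^ (-α)) s := by
  set g : ℝ → ℂ := fun u =>
    ((y ^ α : ℝ) : ℂ) * (kern κ α (δ * y ^ (-α)) u * ex (-(s * u))) with hg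
  have hyα : ((y ^ α : ℝ) : ℂ) ≠ 0 := by
    exact_mod_cast (Real.rpow_pos_of_pos hy α).ne'
  have hmul : ((y ^ (-α) : ℝ) : ℂ) * ((y ^ α : ℝ) : ℂ) = 1 := by
    rw [← Complex.ofReal_mul, ← Real.rpow_add hy, neg_add_cancel, Real.rpow_zero,
      Complex.ofReal_one]
  have h1 : dens κ α δ (y * s) = ∫ t, g (y * t) := by
    unfold dens
    congr 1
    ext t
    simp only [hg, kern]
    rw [psi_scale κ α hy t]
    have e1 : -((δ * y ^ (-α) : ℝ) : ℂ) * (((y ^ α : ℝ) : ℂ) * psi κ α t) = -(δ : ℂ) * psi κ α t := by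
      rw [Complex.ofReal_mul]
      linear_combination (-(δ : ℂ) * psi κ α t) * hmul
    have e2 : y * s * t = s * (y * t) := by ring
    rw [e1, e2, mul_inv]
    field_simp
  rw [h1, Measure.integral_comp_mul_left g y, abs_of_pos (inv_pos.2 hy)]
  simp only [hg]
  rw [integral_const_mul, Complex.real_smul, Real.rpow_sub_one hy.ne', dens]
  push_cast
  field_simp

/-- The limit `Λ(δ)`. -/
noncomputable def lam (κ : ℂ) (α δ : ℝ) : ℝ := (2 * Real.pi)⁻¹ * (dens κ α δ 1).re

/-- The normalised contribution of `n > δ A(x)`. -/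
noncomputable def contrib (p : ℕ → ℝ) (δ : ℝ) (x : ℕ) : ℝ :=
  ((x : ℝ) * Fbar p x) * ∑' n : ℕ, if δ * (1 / Fbar p x) < (n : ℝ) then convPow p n x else 0

lemma Hyp.contrib_tail (h : Hyp p α) {δ : ℝ} (hδ : 0 < δ) (x : ℕ) :
    (Summable fun n : ℕ => if δ * (1 / Fbar p x) < (n : ℝ) then convPow p n x else 0) ∧
    (contrib p δ x : ℂ) = (2 * Real.pi : ℂ)⁻¹ *
      ((((x : ℝ) * Fbar p x : ℝ) : ℂ) * tailInt p (firstN p δ x) x) := by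
  have := h.tsum_tail (firstN p δ x) x
  simp only [firstN_le_iff h hδ] at this
  refine ⟨this.1, ?_⟩
  unfold contrib
  rw [Complex.ofReal_mul, this.2]
  ring

lemma Hyp.tendsto_contrib_complex (h : Hyp p α) {κ : ℂ}
    (hκ : Tendsto (fun x : ℝ => (1 - Phi p (1 / x)) / (Fbar p x : ℂ)) atTop (𝓝 κ))
    {δ : ℝ} (hδ : 0 < δ) :
    Tendsto (fun x : ℕ => (contrib p δ x : ℂ)) atTop
      (𝓝 ((2 * Real.pi : ℂ)⁻¹ * dens κ α δ 1)) := by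
  have := (h.tendsto_tailInt hκ hδ 1).const_mul (2 * Real.pi : ℂ)⁻¹
  simp only [one_mul, Int.cast_one] at this
  exact this.congr fun x => (h.contrib_tail hδ x).2.symm

lemma Hyp.tendsto_contrib (h : Hyp p α) {κ : ℂ}
    (hκ : Tendsto (fun x : ℝ => (1 - Phi p (1 / x)) / (Fbar p x : ℂ)) atTop (𝓝 κ))
    {δ : ℝ} (hδ : 0 < δ) : Tendsto (contrib p δ) atTop (𝓝 (lam κ α δ)) := by
  have := (Complex.continuous_re.tendsto _).comp (h.tendsto_contrib_complex hκ hδ)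
  have e : ((2 * Real.pi : ℂ)⁻¹ * dens κ α δ 1).re = lam κ α δ := by
    unfold lam
    rw [← Complex.re_ofReal_mul]
    push_cast
    rfl
  rw [e] at this
  exact this

/-- The density at `1` is real, being a limit of probabilities. -/
lemma Hyp.dens_one (h : Hyp p α) {κ : ℂ}
    (hκ : Tendsto (fun x : ℝ => (1 - Phi p (1 / x)) / (Fbar p x : ℂ)) atTop (𝓝 κ))
    {δ : ℝ} (hδ : 0 < δ) : dens κ α δ 1 = ((2 * Real.pi * lam κ α δ : ℝ) : ℂ) := by
  have h1 := (Complex.continuous_ofReal.tendsto _).comp (h.tendsto_contrib hκ hδ)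
  have h2 := tendsto_nhds_unique (h.tendsto_contrib_complex hκ hδ) h1
  have hpi : (Real.pi : ℂ) ≠ 0 := by exact_mod_cast Real.pi_ne_zero
  push_cast
  rw [← h2]
  field_simp

/-- The walk never visits the negative half-line, hence the limiting density vanishes there. -/
lemma Hyp.dens_neg_one (h : Hyp p α) {κ : ℂ}
    (hκ : Tendsto (fun x : ℝ => (1 - Phi p (1 / x)) / (Fbar p x : ℂ)) atTop (𝓝 κ))
    {δ : ℝ} (hδ : 0 < δ) : dens κ α δ (-1) = 0 := by
  have h1 := h.tendsto_tailInt hκ hδ (-1)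
  rw [Int.cast_neg, Int.cast_one] at h1
  refine tendsto_nhds_unique h1 (tendsto_const_nhds.congr' ?_)
  filter_upwards [eventually_gt_atTop 0] with x hx
  rw [neg_one_mul, h.tailInt_neg _ hx, mul_zero]

lemma Hyp.lam_nonneg (h : Hyp p α) {κ : ℂ}
    (hκ : Tendsto (fun x : ℝ => (1 - Phi p (1 / x)) / (Fbar p x : ℂ)) atTop (𝓝 κ))
    {δ : ℝ} (hδ : 0 < δ) : 0 ≤ lam κ α δ := by
  refine ge_of_tendsto' (h.tendsto_contrib hκ hδ) fun x => ?_
  refine mul_nonneg (mul_nonneg (Nat.cast_nonneg _) (h.Fbar_pos _).le) (tsum_nonneg fun n => ?_)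
  split_ifs
  exacts [h.convPow_nonneg n x, le_rfl]

lemma Hyp.lam_antitone (h : Hyp p α) {κ : ℂ}
    (hκ : Tendsto (fun x : ℝ => (1 - Phi p (1 / x)) / (Fbar p x : ℂ)) atTop (𝓝 κ)) :
    AntitoneOn (lam κ α) (Set.Ioi 0) := by
  intro δ hδ δ' hδ' hle
  refine le_of_tendsto_of_tendsto' (h.tendsto_contrib hκ hδ') (h.tendsto_contrib hκ hδ) fun x => ?_
  have hF := h.Fbar_pos x
  refine mul_le_mul_of_nonneg_left ?_ (mul_nonneg (Nat.cast_nonneg _) hF.le)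
  refine (h.contrib_tail hδ' x).1.tsum_le_tsum (fun n => ?_) (h.contrib_tail hδ x).1
  have h1 : δ * (1 / Fbar p x) ≤ δ' * (1 / Fbar p x) := by gcongr
  have h2 := h.convPow_nonneg n x
  split_ifs with ha hb hb
  · exact le_rfl
  · exact absurd (h1.trans_lt ha) hb
  · exact h2
  · exact le_rfl

lemma norm_integral_ex_le {t : ℝ} (ht : t ≠ 0) :
    ‖∫ y in Set.Ioc (1 : ℝ) 2, ex (-(y * t))‖ ≤ min 1 (2 / |t|) := by
  refine le_min ?_ ?_
  · refine (norm_integral_le_integral_norm _).trans ?_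
    simp only [norm_ex]
    simp
    norm_num
  · rw [← intervalIntegral.integral_of_le (by norm_num)]
    have htc : (t : ℂ) ≠ 0 := by exact_mod_cast ht
    have hd : ∀ y ∈ Set.uIcc (1 : ℝ) 2,
        HasDerivAt (fun y : ℝ => ex (-(y * t)) * (Complex.I / t)) (ex (-(y * t))) y := by
      intro y _
      have h1 : HasDerivAt (fun y : ℝ => -(y * t)) (-(1 * t)) y := ((hasDerivAt_id y).mul_const t).neg
      have h2 := ((hasDerivAt_ex (-(y * t))).scomp y h1).mul_const (Complex.I / t)
      refine h2.congr_deriv ?_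
      rw [Complex.real_smul]
      push_cast
      field_simp
      rw [Complex.I_sq]
      ring
    rw [intervalIntegral.integral_eq_sub_of_hasDerivAt hd
      ((continuous_ex.comp (by fun_prop)).intervalIntegrable _ _)]
    refine (norm_sub_le _ _).trans (le_of_eq ?_)
    simp only [norm_mul, norm_ex, norm_div, Complex.norm_I, Complex.norm_real, Real.norm_eq_abs]
    ring

lemma integrable_min (h0 : 0 < α) (h1 : α < 1) :
    Integrable fun t : ℝ => |t| ^ (-α) * min 1 (2 / |t|) := by
  refine integrable_abs (f := fun t => t ^ (-α) * min 1 (2 / t)) ?_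
  have hm : Measurable fun t : ℝ => t ^ (-α) * min 1 (2 / t) := by fun_prop
  rw [← Set.Ioc_union_Ioi_eq_Ioi zero_le_one]
  refine IntegrableOn.union ?_ ?_
  · have hi : IntegrableOn (fun t : ℝ => t ^ (-α)) (Set.Ioc 0 1) :=
      (intervalIntegrable_iff_integrableOn_Ioc_of_le zero_le_one).1
        (intervalIntegral.intervalIntegrable_rpow' (by linarith))
    refine hi.mono' hm.aestronglyMeasurable ?_
    filter_upwards [ae_restrict_mem measurableSet_Ioc] with t ht
    have ht0 := ht.1
    rw [Real.norm_of_nonneg (by positivity)]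
    exact mul_le_of_le_one_right (by positivity) (min_le_left _ _)
  · have hi : IntegrableOn (fun t : ℝ => t ^ (-α - 1)) (Set.Ioi 1) :=
      integrableOn_Ioi_rpow_of_lt (by linarith) one_pos
    refine (hi.const_mul 2).mono' hm.aestronglyMeasurable ?_
    filter_upwards [ae_restrict_mem measurableSet_Ioi] with t ht
    have ht0 : (0 : ℝ) < t := one_pos.trans ht
    rw [Real.norm_of_nonneg (by positivity), Real.rpow_sub_one ht0.ne']
    calc _ ≤ t ^ (-α) * (2 / t) := by
          gcongr
          exact min_le_right _ _
      _ = _ := by ring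

/-- Averaging the density over `y ∈ [1, 2]` damps its Fourier transform enough to bound
`Λ(δ)` uniformly in `δ`. -/
lemma Hyp.lam_bdd (h : Hyp p α) {κ : ℂ}
    (hκ : Tendsto (fun x : ℝ => (1 - Phi p (1 / x)) / (Fbar p x : ℂ)) atTop (𝓝 κ)) :
    BddAbove (lam κ α '' Set.Ioi 0) := by
  have hκr := h.kappa_re_pos hκ
  set M := ∫ t : ℝ, ‖κ‖⁻¹ * (|t| ^ (-α) * min 1 (2 / |t|)) with hM
  have h2α : (0 : ℝ) < 2 ^ (α - 1) * (2 * Real.pi) := by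
    have := Real.pi_pos
    positivity
  refine ⟨M / (2 ^ (α - 1) * (2 * Real.pi)), ?_⟩
  rintro _ ⟨δ, hδ, rfl⟩
  have hδ : 0 < δ := hδ
  rw [le_div_iff₀ h2α]
  set f : ℝ → ℝ → ℂ := fun y t => kern κ α δ t * ex (-(y * t)) with hf
  have hfi : Integrable (Function.uncurry f)
      ((volume.restrict (Set.Ioc (1 : ℝ) 2)).prod (volume : Measure ℝ)) := by
    refine ((integrable_kern hκr h.pos h.lt_one hδ).norm.comp_snd _).mono' ?_
      (ae_of_all _ fun z => ?_)
    · refine Measurable.aestronglyMeasurable ?_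
      exact ((measurable_kern κ α δ).comp measurable_snd).mul
        (continuous_ex.measurable.comp (measurable_fst.mul measurable_snd).neg)
    · simp only [Function.uncurry, hf, norm_mul, norm_ex, mul_one]
      exact le_rfl
  have hdi : IntegrableOn (fun y => dens κ α δ y) (Set.Ioc (1 : ℝ) 2) := hfi.integral_prod_left
  have hswap := integral_integral_swap hfi
  have hupper : ‖∫ y in Set.Ioc (1 : ℝ) 2, dens κ α δ y‖ ≤ M := by
    have : ∫ y in Set.Ioc (1 : ℝ) 2, dens κ α δ y
        = ∫ t : ℝ, kern κ α δ t * ∫ y in Set.Ioc (1 : ℝ) 2, ex (-(y * t)) := by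
      refine hswap.trans ?_
      congr 1
      ext t
      exact integral_const_mul _ _
    rw [this]
    refine norm_integral_le_of_norm_le ((integrable_min h.pos h.lt_one).const_mul _) ?_
    filter_upwards [Measure.ae_ne volume (0 : ℝ)] with t ht
    rw [norm_mul, ← mul_assoc]
    have := norm_kern_le hκr α hδ t
    have := norm_integral_ex_le ht
    gcongr
  have hlower : lam κ α δ * (2 ^ (α - 1) * (2 * Real.pi))
      ≤ (∫ y in Set.Ioc (1 : ℝ) 2, dens κ α δ y).re := by
    have hre : (∫ y in Set.Ioc (1 : ℝ) 2, dens κ α δ y).re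
        = ∫ y in Set.Ioc (1 : ℝ) 2, (dens κ α δ y).re := (integral_re hdi).symm
    rw [hre]
    calc lam κ α δ * (2 ^ (α - 1) * (2 * Real.pi))
        = ∫ y in Set.Ioc (1 : ℝ) 2, lam κ α δ * (2 ^ (α - 1) * (2 * Real.pi)) := by
          rw [setIntegral_const]
          norm_num
      _ ≤ _ := by
          refine setIntegral_mono_on (integrableOn_const (by simp)) hdi.re measurableSet_Ioc
            fun y hy => ?_
          have hy0 : 0 < y := one_pos.trans hy.1
          have hyα : 0 < y ^ (-α) := Real.rpow_pos_of_pos hy0 _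
          have e := dens_scale κ α δ 1 hy0
          rw [mul_one, h.dens_one hκ (mul_pos hδ hyα), ← Complex.ofReal_mul] at e
          change _ ≤ (dens κ α δ y).re
          rw [e, Complex.ofReal_re]
          have h1 : lam κ α δ ≤ lam κ α (δ * y ^ (-α)) := by
            refine h.lam_antitone hκ (mul_pos hδ hyα) hδ ?_
            refine mul_le_of_le_one_right hδ.le ?_
            exact Real.rpow_le_one_of_one_le_of_nonpos hy.1.le (by linarith [h.pos])
          have h2 : (2 : ℝ) ^ (α - 1) ≤ y ^ (α - 1) :=
            Real.rpow_le_rpow_of_nonpos hy0 hy.2 (by linarith [h.lt_one])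
          have h3 := h.lam_nonneg hκ hδ
          have hpi := Real.pi_pos
          calc _ = 2 ^ (α - 1) * (2 * Real.pi * lam κ α δ) := by ring
            _ ≤ _ := by gcongr
  exact hlower.trans ((Complex.re_le_norm _).trans hupper)

open FourierTransform in
/-- If `Λ` vanished identically, the density would vanish off `0`, contradicting Fourier
inversion. -/
lemma Hyp.exists_lam_pos (h : Hyp p α) {κ : ℂ}
    (hκ : Tendsto (fun x : ℝ => (1 - Phi p (1 / x)) / (Fbar p x : ℂ)) atTop (𝓝 κ)) :
    ∃ δ : ℝ, 0 < δ ∧ 0 < lam κ α δ := by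
  by_contra! hcon
  have hκr := h.kappa_re_pos hκ
  have hκ0 : κ ≠ 0 := by
    rintro rfl
    simp at hκr
  have hzero : ∀ δ : ℝ, 0 < δ → lam κ α δ = 0 := fun δ hδ =>
    le_antisymm (hcon δ hδ) (h.lam_nonneg hκ hδ)
  have hdens : ∀ y : ℝ, y ≠ 0 → dens κ α 1 y = 0 := by
    intro y hy
    rcases hy.lt_or_gt with hneg | hpos
    · have hy' : 0 < -y := neg_pos.2 hneg
      have e := dens_scale κ α 1 (-1) hy'
      rw [h.dens_neg_one hκ (mul_pos one_pos (Real.rpow_pos_of_pos hy' _)), mul_zero,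
        neg_mul_neg, mul_one] at e
      exact e
    · have e := dens_scale κ α 1 1 hpos
      have hd := mul_pos one_pos (Real.rpow_pos_of_pos hpos (-α))
      rw [h.dens_one hκ hd, hzero _ hd, mul_zero, Complex.ofReal_zero, mul_zero, mul_one] at e
      exact e
  have hF : ∀ w : ℝ, 𝓕 (kern κ α 1) w = dens κ α 1 (2 * Real.pi * w) := by
    intro w
    rw [Real.fourier_real_eq_integral_exp_smul, dens]
    congr 1
    ext v
    rw [smul_eq_mul, mul_comm, ex]
    congr 4
    ring
  have hae : 𝓕 (kern κ α 1) =ᵐ[volume] 0 := by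
    filter_upwards [Measure.ae_ne volume (0 : ℝ)] with w hw
    rw [hF, hdens _ (mul_ne_zero (mul_ne_zero two_ne_zero Real.pi_ne_zero) hw)]
    rfl
  have hFi : Integrable (𝓕 (kern κ α 1)) := (integrable_zero ℝ ℂ volume).congr hae.symm
  have hψ : ContinuousAt (psi κ α) 1 := by
    have hc : ContinuousAt (fun t : ℝ => ((|t| ^ α : ℝ) : ℂ) * κ) 1 := by
      refine ContinuousAt.mul ?_ continuousAt_const
      refine Complex.continuous_ofReal.continuousAt.comp ?_
      exact (continuous_abs.continuousAt).rpow_const (Or.inl (by simp))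
    refine hc.congr ?_
    filter_upwards [lt_mem_nhds (zero_lt_one (α := ℝ))] with t ht
    simp [psi, ht]
  have hψ1 : psi κ α 1 ≠ 0 := by simp [psi, hκ0]
  have hcont : ContinuousAt (kern κ α 1) 1 := by
    unfold kern
    exact ((continuousAt_const.mul hψ).cexp).mul (hψ.inv₀ hψ1)
  have hinv := (integrable_kern hκr h.pos h.lt_one one_pos).fourierInv_fourier_eq hFi hcont
  have h0 : 𝓕⁻ (𝓕 (kern κ α 1)) (1 : ℝ) = 0 := by
    rw [Real.fourierInv_eq]
    refine integral_eq_zero_of_ae ?_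
    filter_upwards [hae] with v hv
    rw [hv]
    simp
  rw [h0] at hinv
  exact mul_ne_zero (Complex.exp_ne_zero _) (inv_ne_zero hψ1) hinv.symm

lemma Hyp.conclusion (h : Hyp p α) :
    ∃ c : ℝ, 0 < c ∧ ∃ δ₀ : ℝ, 0 < δ₀ ∧ ∃ lam : ℝ → ℝ,
      (∀ δ : ℝ, δ ∈ Set.Ioo 0 δ₀ → Tendsto (contrib p δ) atTop (𝓝 (lam δ))) ∧
      Tendsto lam (𝓝[>] (0 : ℝ)) (𝓝 c) := by
  obtain ⟨κ, hκ⟩ := h.exists_tendsto_one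
  obtain ⟨δ, hδ, hpos⟩ := h.exists_lam_pos hκ
  refine ⟨sSup (lam κ α '' Set.Ioi 0), ?_, 1, one_pos, lam κ α,
    fun δ hδ => h.tendsto_contrib hκ hδ.1,
    (h.lam_antitone hκ).tendsto_nhdsGT (h.lam_bdd hκ)⟩
  exact hpos.trans_le (le_csSup (h.lam_bdd hκ) ⟨δ, hδ, rfl⟩)

end LargeN

/-- with `A(x) = 1/F̄(x)`, the contribution of large `n` obeys a stable local
limit: for all sufficiently small `δ > 0` the limit
`lim_{x→∞} (x/A(x))·Σ_{n > δ·A(x)} P(Sₙ = x) =: Λ(δ)` exists, and `Λ(δ)` converges, as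
`δ → 0+`, to a strictly positive real constant. -/
theorem large_n_contribution (p : ℕ → ℝ) (α : ℝ)
    (hp0 : ∀ k, 0 ≤ p k) (hp1 : HasSum p 1) (hp0lt : p 0 < 1)
    (hap : ∀ d : ℕ, (∀ k, p k ≠ 0 → d ∣ k) → d = 1)
    (hα : 0 < α ∧ α < 1)
    (hreg : ∀ l : ℝ, 0 < l →
      Tendsto (fun x : ℝ => Fbar p (l * x) / Fbar p x) atTop (nhds (l ^ (-α)))) :
    ∃ c : ℝ, 0 < c ∧ ∃ δ₀ : ℝ, 0 < δ₀ ∧ ∃ lam : ℝ → ℝ,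
      (∀ δ : ℝ, δ ∈ Set.Ioo 0 δ₀ →
        Tendsto (fun x : ℕ => ((x : ℝ) * Fbar p x) *
            ∑' n : ℕ, if δ * (1 / Fbar p x) < (n : ℝ) then convPow p n x else 0)
          atTop (nhds (lam δ))) ∧
      Tendsto lam (𝓝[>] (0 : ℝ)) (nhds c) := by
  exact LargeN.Hyp.conclusion ⟨hp0, hp1, hap, hα.1, hα.2, hreg⟩
end

section
/- For every fixed γ > 0 there exist a constant c > 0, an integer n₀ and a real θ₀ > 0 such that for all n ≥ n₀ and all integers x with x ≥ θ₀·aₙ, the exponentially tilted and truncated total mass m₀ = Σ_{|z| ≤ γx} e^{μz}·p(z) satisfies |1 − m₀| ≤ c/n, where Λ = 1/(n·F̄(x)) and μ = (log Λ)/(γx); consequently m₀ⁿ is bounded above uniformly over all such n and x. -/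
/-!
Write `y = γx`, `L = log Λ`, so `μ = L / y`. The key estimate is
`|1 - m₀| ≤ C · e^L · H(y/2)` for all large `y` and all `L ≥ 0` (`tilt_bound`); since
`e^L = 1/(n F̄(x))` and `H(γx/2) = O(H(x)) = O(F̄(x))`, it gives `|1 - m₀| = O(1/n)`, and then
`m₀ⁿ ≤ (1 + c/n)ⁿ ≤ e^c`. Taking `θ₀ = 2` makes `n F̄(x) ≤ n H(2aₙ) → 2^(-α) < 1`, so `L ≥ 0`.

For the key estimate, the points with `|z| > y` and those with `y/2 < z ≤ y` contribute at most
`H(y)` and `e^L H(y/2)`. On the remaining points the exponent `μz` is at most `L/2`. If `α < 1`,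
then `|e^{μz} - 1| ≤ |μz| e^{L/2}` there, and `E[|X|; |X| ≤ y] = O(y H(y))`, so the contribution
is `O(L e^{L/2} H(y)) = O(e^L H(y))`. If `α > 1`, the mean being zero allows one to subtract the
linear term `μz`; then `|e^{μz} - 1 - μz| ≤ (μz)² e^{L/2}` and `E[X²; |X| ≤ y] = O(y² H(y))`
give `O(L² e^{L/2} H(y))`, while the linear term outside `[-y, y]` costs
`μ E[|X|; |X| > y] = O(L H(y))`.

The two Karamata-type moment bounds (`truncMoment_le`, `tailMoment_le`) are proved by dyadic
induction from the limits of `H(y/2)/H(y)` and `H(2y)/H(y)` alone.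
-/

open Filter Topology

/-- `FbarZ p x = P(X > x)`, the right tail of a ℤ-valued step distribution with pmf `p`. -/
noncomputable def FbarZ (p : ℤ → ℝ) (x : ℝ) : ℝ := ∑' z : ℤ, if x < (z : ℝ) then p z else 0

/-- `HZ p x = P(|X| > x)`, the two-sided tail. -/
noncomputable def HZ (p : ℤ → ℝ) (x : ℝ) : ℝ := ∑' z : ℤ, if x < |(z : ℝ)| then p z else 0

/-- `Λ = 1/(n·F̄(x))`. -/
noncomputable def tiltLambda (p : ℤ → ℝ) (n : ℕ) (x : ℤ) : ℝ :=
  1 / ((n : ℝ) * FbarZ p (x : ℝ))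

/-- `μ = log Λ / (γx)`. -/
noncomputable def tiltMu (p : ℤ → ℝ) (γ : ℝ) (n : ℕ) (x : ℤ) : ℝ :=
  Real.log (tiltLambda p n x) / (γ * (x : ℝ))

/-- `m₀ = Σ_{|z| ≤ γx} e^{μz}·p(z)`, the tilted truncated total mass. -/
noncomputable def tiltM0 (p : ℤ → ℝ) (γ : ℝ) (n : ℕ) (x : ℤ) : ℝ :=
  ∑' z : ℤ, if |(z : ℝ)| ≤ γ * (x : ℝ) then Real.exp (tiltMu p γ n x * (z : ℝ)) * p z else 0

/-- The truncated absolute moment `E[|X|^k; |X| ≤ y]`. -/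
noncomputable def truncMoment (p : ℤ → ℝ) (k : ℕ) (y : ℝ) : ℝ :=
  ∑' z : ℤ, if |(z : ℝ)| ≤ y then |(z : ℝ)| ^ k * p z else 0

/-! ### Elementary inequalities for the exponential -/

lemma abs_exp_sub_one_le_mul {u K : ℝ} (hK : 0 ≤ K) (hu : u ≤ K) :
    |Real.exp u - 1| ≤ |u| * Real.exp K := by
  have hK1 : 1 ≤ Real.exp K := Real.one_le_exp hK
  have huK : Real.exp u ≤ Real.exp K := Real.exp_le_exp.2 hu
  rcases le_total 0 u with h | h
  · rw [abs_of_nonneg (by linarith [Real.add_one_le_exp u]), abs_of_nonneg h]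
    have h1 := Real.add_one_le_exp (-u)
    have h2 : Real.exp (-u) * Real.exp u = 1 := by rw [← Real.exp_add]; simp
    nlinarith [Real.exp_pos u]
  · rw [abs_of_nonpos (by linarith [Real.exp_le_one_iff.2 h]), abs_of_nonpos h]
    nlinarith [Real.add_one_le_exp u]

lemma abs_exp_sub_one_sub_le_mul {u K : ℝ} (hK : 0 ≤ K) (hu : u ≤ K) :
    |Real.exp u - 1 - u| ≤ |u| ^ 2 * Real.exp K := by
  have hK1 : 1 ≤ Real.exp K := Real.one_le_exp hK
  have huK : Real.exp u ≤ Real.exp K := Real.exp_le_exp.2 hu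
  have h0 := Real.add_one_le_exp u
  rw [abs_of_nonneg (by linarith), sq_abs]
  have h1 := Real.add_one_le_exp (-u)
  have h2 : Real.exp (-u) * Real.exp u = 1 := by rw [← Real.exp_add]; simp
  have hpos := Real.exp_pos u
  rcases le_total 0 u with h | h
  · have h3 : Real.exp u - 1 ≤ u * Real.exp u := by nlinarith
    have h4 : u * (Real.exp u - 1) ≤ u * (u * Real.exp u) := by gcongr
    have h5 : u ^ 2 * Real.exp u ≤ u ^ 2 * Real.exp K := by gcongr
    nlinarith
  · have h3 : (1 - u) * Real.exp u ≤ 1 := by nlinarith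
    have h4 : Real.exp u - 1 - u ≤ u ^ 2 := by
      by_contra hc
      push Not at hc
      nlinarith [mul_pos (show 0 < 1 - u by linarith) (sub_pos.2 hc),
        mul_nonneg (neg_nonneg.2 h) (sq_nonneg u)]
    nlinarith [sq_nonneg u]

/-! ### Tails and truncated moments -/

lemma summable_ite_of_le {p : ℤ → ℝ} (hp0 : ∀ z, 0 ≤ p z) (hp1 : HasSum p 1)
    (P : ℤ → Prop) [DecidablePred P] (f : ℤ → ℝ) (C : ℝ)
    (hf : ∀ z, P z → |f z| ≤ C) :
    Summable (fun z => if P z then f z * p z else 0) := by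
  refine Summable.of_norm_bounded (g := fun z => |C| * p z) (hp1.summable.mul_left _) ?_
  intro z
  split_ifs with h
  · rw [norm_mul, Real.norm_eq_abs, Real.norm_eq_abs, abs_of_nonneg (hp0 z)]
    exact mul_le_mul_of_nonneg_right ((hf z h).trans (le_abs_self C)) (hp0 z)
  · simpa using mul_nonneg (abs_nonneg C) (hp0 z)

lemma summable_ite_mass {p : ℤ → ℝ} (hp0 : ∀ z, 0 ≤ p z) (hp1 : HasSum p 1)
    (P : ℤ → Prop) [DecidablePred P] :
    Summable (fun z => if P z then p z else 0) := by
  simpa using summable_ite_of_le hp0 hp1 P (fun _ => 1) 1 (by simp)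

lemma summable_truncMoment {p : ℤ → ℝ} (hp0 : ∀ z, 0 ≤ p z) (hp1 : HasSum p 1)
    (k : ℕ) (y : ℝ) :
    Summable (fun z : ℤ => if |(z : ℝ)| ≤ y then |(z : ℝ)| ^ k * p z else 0) := by
  refine summable_ite_of_le hp0 hp1 _ (fun z : ℤ => |(z : ℝ)| ^ k) (y ^ k) ?_
  intro z hz
  rw [abs_pow, abs_abs]
  gcongr

lemma HZ_nonneg {p : ℤ → ℝ} (hp0 : ∀ z, 0 ≤ p z)
    (x : ℝ) : 0 ≤ HZ p x :=
  tsum_nonneg fun z => by split_ifs <;> simp [hp0]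

lemma HZ_anti {p : ℤ → ℝ} (hp0 : ∀ z, 0 ≤ p z) (hp1 : HasSum p 1)
    {x y : ℝ} (h : x ≤ y) : HZ p y ≤ HZ p x := by
  refine Summable.tsum_le_tsum ?_ (summable_ite_mass hp0 hp1 _) (summable_ite_mass hp0 hp1 _)
  intro z
  have := hp0 z
  split_ifs <;> linarith

lemma FbarZ_le_HZ {p : ℤ → ℝ} (hp0 : ∀ z, 0 ≤ p z) (hp1 : HasSum p 1)
    (x : ℝ) : FbarZ p x ≤ HZ p x := by
  refine Summable.tsum_le_tsum ?_ (summable_ite_mass hp0 hp1 _) (summable_ite_mass hp0 hp1 _)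
  intro z
  have := hp0 z
  have := le_abs_self (z : ℝ)
  split_ifs <;> linarith

lemma truncMoment_le_pow {p : ℤ → ℝ} (hp0 : ∀ z, 0 ≤ p z) (hp1 : HasSum p 1)
    (k : ℕ) {y : ℝ} (hy : 0 ≤ y) : truncMoment p k y ≤ y ^ k := by
  have h : truncMoment p k y ≤ ∑' z, y ^ k * p z := by
    refine Summable.tsum_le_tsum ?_ (summable_truncMoment hp0 hp1 k y)
      (hp1.summable.mul_left _)
    intro z
    have := hp0 z
    split_ifs with h
    · gcongr
    · positivity
  rwa [tsum_mul_left, hp1.tsum_eq, mul_one] at h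

lemma truncMoment_step {p : ℤ → ℝ} (hp0 : ∀ z, 0 ≤ p z) (hp1 : HasSum p 1)
    (k : ℕ) {y : ℝ} (hy : 0 ≤ y) :
    truncMoment p k y ≤ truncMoment p k (y / 2) + y ^ k * HZ p (y / 2) := by
  unfold truncMoment HZ
  rw [← tsum_mul_left, ← Summable.tsum_add (summable_truncMoment hp0 hp1 k _)
    ((summable_ite_mass hp0 hp1 _).mul_left _)]
  refine Summable.tsum_le_tsum ?_ (summable_truncMoment hp0 hp1 k y)
    ((summable_truncMoment hp0 hp1 k _).add ((summable_ite_mass hp0 hp1 _).mul_left _))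
  intro z
  have := hp0 z
  by_cases h1 : |(z : ℝ)| ≤ y / 2
  · have h2 : |(z : ℝ)| ≤ y := by linarith
    simp [h1, h2, not_lt.2 h1]
  · by_cases h2 : |(z : ℝ)| ≤ y
    · simp only [h1, h2, not_le.1 h1, if_true, if_false, zero_add]
      gcongr
    · simp only [h1, h2, not_le.1 h1, if_true, if_false, zero_add]
      positivity

/-- Karamata-type bound for truncated moments of order above the tail index: if halving the
argument multiplies the tail by at most `ρ < 2^k`, then `E[|X|^k; |X| ≤ y] = O(y^k H(y))`. -/
lemma truncMoment_le {p : ℤ → ℝ} (hp0 : ∀ z, 0 ≤ p z) (hp1 : HasSum p 1)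
    {k : ℕ} {ρ y0 : ℝ} (hρ0 : 0 ≤ ρ) (hρ : ρ < 2 ^ k) (hy0 : 0 < y0)
    (hpos : ∀ y, y0 ≤ y → 0 < HZ p y)
    (hdoub : ∀ y, y0 ≤ y → HZ p (y / 2) ≤ ρ * HZ p y) :
    ∃ C, 0 ≤ C ∧ ∀ y, y0 ≤ y → truncMoment p k y ≤ C * (y ^ k * HZ p y) := by
  have h2k : (0 : ℝ) < 2 ^ k := by positivity
  set C0 : ℝ := (2 * y0) ^ k / (y0 ^ k * HZ p (2 * y0)) with hC0
  set C1 : ℝ := ρ / (1 - ρ / 2 ^ k) with hC1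
  have hr : ρ / 2 ^ k < 1 := (div_lt_one h2k).2 hρ
  have hH2 := hpos (2 * y0) (by linarith)
  have hC0n : 0 ≤ C0 := by positivity
  have hCn : 0 ≤ max C0 C1 := hC0n.trans (le_max_left _ _)
  refine ⟨max C0 C1, hCn, ?_⟩
  have key : ∀ m : ℕ, ∀ y, y0 ≤ y → y ≤ 2 ^ (m + 1) * y0 →
      truncMoment p k y ≤ max C0 C1 * (y ^ k * HZ p y) := by
    intro m
    induction m with
    | zero =>
      intro y h1 h2
      norm_num at h2
      calc truncMoment p k y ≤ y ^ k := truncMoment_le_pow hp0 hp1 k (by linarith)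
        _ ≤ (2 * y0) ^ k := by gcongr; linarith
        _ = C0 * (y0 ^ k * HZ p (2 * y0)) := by rw [hC0]; field_simp
        _ ≤ max C0 C1 * (y ^ k * HZ p y) := by
          have := HZ_anti hp0 hp1 h2
          have := le_max_left C0 C1
          have : 0 ≤ y := by linarith
          gcongr
    | succ m ih =>
      intro y h1 h2
      by_cases h3 : y ≤ 2 ^ (m + 1) * y0
      · exact ih y h1 h3
      have h4 : y0 ≤ y / 2 := by
        have : (1 : ℝ) ≤ 2 ^ m := one_le_pow₀ (by norm_num)
        rw [pow_succ] at h3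
        nlinarith
      have h5 := ih (y / 2) h4 (by rw [pow_succ] at h2; linarith)
      have hy : 0 < y := by linarith
      have h6 := hdoub y h1
      have hC1' : ρ ≤ max C0 C1 * (1 - ρ / 2 ^ k) := by
        rw [← div_le_iff₀ (by linarith)]; exact le_max_right _ _
      have hHy := hpos y h1
      calc truncMoment p k y
          ≤ truncMoment p k (y / 2) + y ^ k * HZ p (y / 2) := truncMoment_step hp0 hp1 k hy.le
        _ ≤ max C0 C1 * ((y / 2) ^ k * (ρ * HZ p y)) + y ^ k * (ρ * HZ p y) := by
          refine add_le_add (h5.trans ?_) ?_ <;> gcongr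
        _ = (max C0 C1 * (ρ / 2 ^ k) + ρ) * (y ^ k * HZ p y) := by rw [div_pow]; field_simp
        _ ≤ max C0 C1 * (y ^ k * HZ p y) := by
          have : 0 < y ^ k * HZ p y := by positivity
          gcongr
          linarith
  intro y hy
  obtain ⟨m, hm⟩ := pow_unbounded_of_one_lt (y / y0) (show (1 : ℝ) < 2 by norm_num)
  refine key m y hy ?_
  rw [div_lt_iff₀ hy0] at hm
  rw [pow_succ]
  nlinarith [pow_pos (show (0 : ℝ) < 2 by norm_num) m]

/-- Karamata-type bound for the first moment of the tail when the tail index exceeds one: if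
doubling the argument multiplies the tail by at most `ρ < 1/2`, then
`E[|X|; |X| > y] = O(y H(y))`, and in particular this expectation is finite. -/
lemma tailMoment_le {p : ℤ → ℝ} (hp0 : ∀ z, 0 ≤ p z) (hp1 : HasSum p 1)
    {ρ y0 : ℝ} (hρ : ρ < 1 / 2) (hy0 : 0 < y0)
    (hdoub : ∀ y, y0 ≤ y → HZ p (2 * y) ≤ ρ * HZ p y) :
    ∃ C, 0 ≤ C ∧ ∀ y, y0 ≤ y →
      Summable (fun z : ℤ => if y < |(z : ℝ)| then |(z : ℝ)| * p z else 0) ∧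
      ∑' z : ℤ, (if y < |(z : ℝ)| then |(z : ℝ)| * p z else 0) ≤ C * (y * HZ p y) := by
  set C : ℝ := 2 / (1 - 2 * ρ) with hC
  have hC0 : 0 ≤ C := div_nonneg (by norm_num) (by linarith)
  have hCe : C * (1 - 2 * ρ) = 2 := by rw [hC]; field_simp [show 1 - 2 * ρ ≠ 0 by linarith]
  refine ⟨C, hC0, ?_⟩
  have hs : ∀ y Y : ℝ, Summable (fun z : ℤ =>
      if y < |(z : ℝ)| ∧ |(z : ℝ)| ≤ Y then |(z : ℝ)| * p z else 0) := fun y Y =>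
    summable_ite_of_le hp0 hp1 _ (fun z : ℤ => |(z : ℝ)|) Y (fun z hz => by simpa using hz.2)
  have key : ∀ m : ℕ, ∀ y, y0 ≤ y →
      ∑' z : ℤ, (if y < |(z : ℝ)| ∧ |(z : ℝ)| ≤ 2 ^ m * y then |(z : ℝ)| * p z else 0)
        ≤ C * (y * HZ p y) := by
    intro m
    induction m with
    | zero =>
      intro y hy
      have : ∀ z : ℤ, ¬ (y < |(z : ℝ)| ∧ |(z : ℝ)| ≤ 2 ^ 0 * y) := by
        rintro z ⟨h1, h2⟩
        norm_num at h2
        linarith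
      simp only [this, if_false, tsum_zero]
      have := HZ_nonneg hp0 y
      have : 0 ≤ y := by linarith
      positivity
    | succ m ih =>
      intro y hy
      have hy' : 0 < y := by linarith
      have h1 : ∑' z : ℤ,
          (if y < |(z : ℝ)| ∧ |(z : ℝ)| ≤ 2 ^ (m + 1) * y then |(z : ℝ)| * p z else 0)
          ≤ 2 * y * HZ p y + ∑' z : ℤ,
          (if 2 * y < |(z : ℝ)| ∧ |(z : ℝ)| ≤ 2 ^ m * (2 * y) then |(z : ℝ)| * p z else 0) := by
        unfold HZ
        rw [← tsum_mul_left, ← Summable.tsum_add ((summable_ite_mass hp0 hp1 _).mul_left _)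
          (hs _ _)]
        refine Summable.tsum_le_tsum ?_ (hs _ _)
          (((summable_ite_mass hp0 hp1 _).mul_left _).add (hs _ _))
        intro z
        have := hp0 z
        have e : (2 : ℝ) ^ (m + 1) * y = 2 ^ m * (2 * y) := by ring
        rw [e]
        by_cases a1 : y < |(z : ℝ)|
        · by_cases a2 : 2 * y < |(z : ℝ)|
          · simp only [a1, a2, true_and, if_true]
            have : 0 ≤ 2 * y * p z := by positivity
            linarith
          · simp only [a1, a2, true_and, false_and, if_true, if_false, add_zero]
            have : |(z : ℝ)| * p z ≤ 2 * y * p z := by gcongr; linarith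
            split_ifs
            · exact this
            · positivity
        · have a2 : ¬ 2 * y < |(z : ℝ)| := by linarith
          simp [a1, a2]
      have h2 := ih (2 * y) (by linarith)
      have h3 := hdoub y hy
      calc _ ≤ _ := h1
        _ ≤ 2 * y * HZ p y + C * (2 * y * (ρ * HZ p y)) := by
          refine add_le_add le_rfl (h2.trans ?_)
          gcongr
        _ = (C * (1 - 2 * ρ) + C * (2 * ρ)) * (y * HZ p y) := by rw [hCe]; ring
        _ = C * (y * HZ p y) := by ring
  intro y hy
  have hy' : 0 < y := by linarith
  have hn : ∀ z : ℤ, 0 ≤ (if y < |(z : ℝ)| then |(z : ℝ)| * p z else 0) := by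
    intro z
    have := hp0 z
    split_ifs <;> positivity
  have hfin : ∀ s : Finset ℤ,
      ∑ z ∈ s, (if y < |(z : ℝ)| then |(z : ℝ)| * p z else 0) ≤ C * (y * HZ p y) := by
    intro s
    obtain ⟨m, hm⟩ := pow_unbounded_of_one_lt ((∑ z ∈ s, |(z : ℝ)|) / y)
      (show (1 : ℝ) < 2 by norm_num)
    rw [div_lt_iff₀ hy'] at hm
    refine le_trans ?_ (key m y hy)
    refine le_trans (le_of_eq ?_) ((hs y (2 ^ m * y)).sum_le_tsum s ?_)
    · refine Finset.sum_congr rfl fun z hz => ?_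
      have : |(z : ℝ)| ≤ 2 ^ m * y :=
        (Finset.single_le_sum (f := fun z : ℤ => |(z : ℝ)|)
          (fun _ _ => abs_nonneg _) hz).trans hm.le
      simp [this]
    · intro z _
      have := hp0 z
      split_ifs <;> positivity
  have hsum := summable_of_sum_le hn hfin
  exact ⟨hsum, hsum.tsum_le_of_sum_le hfin⟩

/-! ### Bounding the tilted mass -/

/-- Pointwise estimate behind the case `α < 1`, with `μ = L / y`. -/
lemma pointwise_small {p : ℤ → ℝ} (hp0 : ∀ z, 0 ≤ p z)
    {L y : ℝ} (hL : 0 ≤ L) (hy : 0 < y) (z : ℤ) :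
    |p z - (if |(z : ℝ)| ≤ y then Real.exp (L / y * z) * p z else 0)|
      ≤ (if y < |(z : ℝ)| then p z else 0)
        + Real.exp (L / 2) * (L / y) * (if |(z : ℝ)| ≤ y then |(z : ℝ)| ^ 1 * p z else 0)
        + Real.exp L * (if y / 2 < |(z : ℝ)| then p z else 0) := by
  have hz := hp0 z
  have hμ : 0 ≤ L / y := by positivity
  by_cases h : |(z : ℝ)| ≤ y
  · have e : |p z - Real.exp (L / y * z) * p z| = |Real.exp (L / y * z) - 1| * p z := by
      rw [← abs_of_nonneg hz, ← abs_mul, abs_of_nonneg hz, abs_sub_comm]; ring_nf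
    simp only [h, not_lt.2 h, if_true, if_false, e, zero_add, pow_one]
    by_cases h2 : (z : ℝ) ≤ y / 2
    · have hu : L / y * z ≤ L / 2 := by
        calc L / y * z ≤ L / y * (y / 2) := by gcongr
          _ = L / 2 := by field_simp
      have h3 := abs_exp_sub_one_le_mul (by positivity) hu
      rw [abs_mul, abs_of_nonneg hμ] at h3
      have h4 := mul_le_mul_of_nonneg_right h3 hz
      have h5 : 0 ≤ Real.exp L * (if y / 2 < |(z : ℝ)| then p z else 0) := by
        split_ifs <;> positivity
      linarith
    · push Not at h2
      have h3 : y / 2 < |(z : ℝ)| := h2.trans_le (le_abs_self _)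
      have hz0 : 0 ≤ (z : ℝ) := by linarith
      have hu0 : 0 ≤ L / y * z := by positivity
      have hu : L / y * z ≤ L := by
        calc L / y * z ≤ L / y * y := by gcongr; exact (le_abs_self _).trans h
          _ = L := by field_simp
      have h4 : |Real.exp (L / y * z) - 1| ≤ Real.exp L := by
        rw [abs_of_nonneg (by linarith [Real.one_le_exp hu0])]
        linarith [Real.exp_le_exp.2 hu]
      have h5 := mul_le_mul_of_nonneg_right h4 hz
      simp only [h3, if_true]
      have : 0 ≤ Real.exp (L / 2) * (L / y) * (|(z : ℝ)| * p z) := by positivity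
      linarith
  · have h2 : y / 2 < |(z : ℝ)| := by linarith
    simp only [h, not_le.1 h, h2, if_true, if_false, sub_zero, mul_zero, abs_of_nonneg hz]
    have : 0 ≤ Real.exp L * p z := by positivity
    linarith

/-- Pointwise estimate behind the case `α > 1`, with `μ = L / y`; the added linear term has
expectation zero. -/
lemma pointwise_large {p : ℤ → ℝ} (hp0 : ∀ z, 0 ≤ p z)
    {L y : ℝ} (hL : 0 ≤ L) (hy : 0 < y) (z : ℤ) :
    |p z - (if |(z : ℝ)| ≤ y then Real.exp (L / y * z) * p z else 0) + L / y * (z * p z)|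
      ≤ (if y < |(z : ℝ)| then p z else 0)
        + L / y * (if y < |(z : ℝ)| then |(z : ℝ)| * p z else 0)
        + Real.exp (L / 2) * (L / y) ^ 2 *
          (if |(z : ℝ)| ≤ y then |(z : ℝ)| ^ 2 * p z else 0)
        + Real.exp L * (if y / 2 < |(z : ℝ)| then p z else 0) := by
  have hz := hp0 z
  have hμ : 0 ≤ L / y := by positivity
  by_cases h : |(z : ℝ)| ≤ y
  · have e : |p z - Real.exp (L / y * z) * p z + L / y * (z * p z)|
        = |Real.exp (L / y * z) - 1 - L / y * z| * p z := by
      rw [show p z - Real.exp (L / y * z) * p z + L / y * (z * p z)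
        = -((Real.exp (L / y * z) - 1 - L / y * z) * p z) by ring, abs_neg, abs_mul,
        abs_of_nonneg hz]
    simp only [h, not_lt.2 h, if_true, if_false, e, zero_add, mul_zero]
    by_cases h2 : (z : ℝ) ≤ y / 2
    · have hu : L / y * z ≤ L / 2 := by
        calc L / y * z ≤ L / y * (y / 2) := by gcongr
          _ = L / 2 := by field_simp
      have h3 := abs_exp_sub_one_sub_le_mul (by positivity) hu
      rw [abs_mul (L / y), abs_of_nonneg hμ, mul_pow] at h3
      have h4 := mul_le_mul_of_nonneg_right h3 hz
      have h5 : 0 ≤ Real.exp L * (if y / 2 < |(z : ℝ)| then p z else 0) := by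
        split_ifs <;> positivity
      linarith
    · push Not at h2
      have h3 : y / 2 < |(z : ℝ)| := h2.trans_le (le_abs_self _)
      have hz0 : 0 ≤ (z : ℝ) := by linarith
      have hu0 : 0 ≤ L / y * z := by positivity
      have hu : L / y * z ≤ L := by
        calc L / y * z ≤ L / y * y := by gcongr; exact (le_abs_self _).trans h
          _ = L := by field_simp
      have h4 : |Real.exp (L / y * z) - 1 - L / y * z| ≤ Real.exp L := by
        rw [abs_of_nonneg (by linarith [Real.add_one_le_exp (L / y * z)])]
        linarith [Real.exp_le_exp.2 hu]
      have h5 := mul_le_mul_of_nonneg_right h4 hz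
      simp only [h3, if_true]
      have : 0 ≤ Real.exp (L / 2) * (L / y) ^ 2 * (|(z : ℝ)| ^ 2 * p z) := by positivity
      linarith
  · have h2 : y / 2 < |(z : ℝ)| := by linarith
    simp only [h, not_le.1 h, h2, if_true, if_false, sub_zero, mul_zero]
    have : 0 ≤ Real.exp L * p z := by positivity
    have h3 : |p z + L / y * (z * p z)| ≤ p z + L / y * (|(z : ℝ)| * p z) := by
      refine (abs_add_le _ _).trans ?_
      rw [abs_mul, abs_mul, abs_of_nonneg hz, abs_of_nonneg hμ]
    linarith

lemma summable_tilt {p : ℤ → ℝ} (hp0 : ∀ z, 0 ≤ p z) (hp1 : HasSum p 1)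
    {L y : ℝ} (hL : 0 ≤ L) (hy : 0 < y) :
    Summable (fun z : ℤ => if |(z : ℝ)| ≤ y then Real.exp (L / y * z) * p z else 0) := by
  refine summable_ite_of_le hp0 hp1 _ (fun z : ℤ => Real.exp (L / y * z)) (Real.exp L) ?_
  intro z hz
  rw [Real.abs_exp, Real.exp_le_exp]
  calc L / y * z ≤ L / y * y := by gcongr; exact (le_abs_self _).trans hz
    _ = L := by field_simp

lemma tilt_small {p : ℤ → ℝ} (hp0 : ∀ z, 0 ≤ p z) (hp1 : HasSum p 1)
    {L y : ℝ} (hL : 0 ≤ L) (hy : 0 < y) :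
    |1 - ∑' z : ℤ, (if |(z : ℝ)| ≤ y then Real.exp (L / y * z) * p z else 0)|
      ≤ HZ p y + Real.exp (L / 2) * (L / y) * truncMoment p 1 y + Real.exp L * HZ p (y / 2) := by
  rw [← hp1.tsum_eq, ← hp1.summable.tsum_sub (summable_tilt hp0 hp1 hL hy)]
  have s1 := summable_ite_mass hp0 hp1 (fun z : ℤ => y < |(z : ℝ)|)
  have s2 := (summable_truncMoment hp0 hp1 1 y).mul_left (Real.exp (L / 2) * (L / y))
  have s3 := (summable_ite_mass hp0 hp1 (fun z : ℤ => y / 2 < |(z : ℝ)|)).mul_left (Real.exp L)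
  unfold HZ truncMoment
  rw [← tsum_mul_left, ← tsum_mul_left, ← s1.tsum_add s2, ← (s1.add s2).tsum_add s3,
    ← Real.norm_eq_abs]
  exact tsum_of_norm_bounded ((s1.add s2).add s3).hasSum (pointwise_small hp0 hL hy)

lemma tilt_large {p : ℤ → ℝ} (hp0 : ∀ z, 0 ≤ p z) (hp1 : HasSum p 1)
    {L y : ℝ} (hL : 0 ≤ L) (hy : 0 < y)
    (hmean : ∑' z : ℤ, (z : ℝ) * p z = 0)
    (hs : Summable (fun z : ℤ => if y < |(z : ℝ)| then |(z : ℝ)| * p z else 0)) :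
    |1 - ∑' z : ℤ, (if |(z : ℝ)| ≤ y then Real.exp (L / y * z) * p z else 0)|
      ≤ HZ p y + L / y * ∑' z : ℤ, (if y < |(z : ℝ)| then |(z : ℝ)| * p z else 0)
        + Real.exp (L / 2) * (L / y) ^ 2 * truncMoment p 2 y + Real.exp L * HZ p (y / 2) := by
  have hz : Summable (fun z : ℤ => (z : ℝ) * p z) := by
    refine Summable.of_norm_bounded (hs.add (summable_truncMoment hp0 hp1 1 y)) fun z => ?_
    rw [norm_mul, Real.norm_eq_abs, Real.norm_eq_abs, abs_of_nonneg (hp0 z)]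
    by_cases h : |(z : ℝ)| ≤ y
    · simp [h, not_lt.2 h]
    · simp [h, not_le.1 h]
  have e : 1 - ∑' z : ℤ, (if |(z : ℝ)| ≤ y then Real.exp (L / y * z) * p z else 0)
      = ∑' z : ℤ, (p z - (if |(z : ℝ)| ≤ y then Real.exp (L / y * z) * p z else 0)
        + L / y * (z * p z)) := by
    rw [(hp1.summable.sub (summable_tilt hp0 hp1 hL hy)).tsum_add (hz.mul_left _),
      tsum_mul_left, hmean, hp1.summable.tsum_sub (summable_tilt hp0 hp1 hL hy), hp1.tsum_eq]
    ring
  rw [e]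
  have s1 := summable_ite_mass hp0 hp1 (fun z : ℤ => y < |(z : ℝ)|)
  have s2 := hs.mul_left (L / y)
  have s3 := (summable_truncMoment hp0 hp1 2 y).mul_left (Real.exp (L / 2) * (L / y) ^ 2)
  have s4 := (summable_ite_mass hp0 hp1 (fun z : ℤ => y / 2 < |(z : ℝ)|)).mul_left (Real.exp L)
  unfold HZ truncMoment
  rw [← tsum_mul_left, ← tsum_mul_left, ← tsum_mul_left, ← s1.tsum_add s2,
    ← (s1.add s2).tsum_add s3, ← ((s1.add s2).add s3).tsum_add s4, ← Real.norm_eq_abs]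
  exact tsum_of_norm_bounded (((s1.add s2).add s3).add s4).hasSum (pointwise_large hp0 hL hy)

/-! ### Consequences of regular variation -/

lemma HZ_pos_eventually {p : ℤ → ℝ} (hp0 : ∀ z, 0 ≤ p z)
    {α : ℝ} (hH : ∀ l : ℝ, 0 < l →
      Tendsto (fun x : ℝ => HZ p (l * x) / HZ p x) atTop (nhds (l ^ (-α)))) :
    ∀ᶠ x in atTop, 0 < HZ p x := by
  have h := (hH 1 one_pos).eventually (lt_mem_nhds (show (0 : ℝ) < 1 ^ (-α) by simp))
  filter_upwards [h] with x hx
  refine (HZ_nonneg hp0 x).lt_of_ne fun h0 => ?_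
  rw [← h0] at hx
  simp at hx

lemma HZ_mul_le_eventually {p : ℤ → ℝ} (hp0 : ∀ z, 0 ≤ p z)
    {α : ℝ} (hH : ∀ l : ℝ, 0 < l →
      Tendsto (fun x : ℝ => HZ p (l * x) / HZ p x) atTop (nhds (l ^ (-α))))
    {l ρ : ℝ} (hl : 0 < l) (hρ : l ^ (-α) < ρ) :
    ∀ᶠ x in atTop, HZ p (l * x) ≤ ρ * HZ p x := by
  filter_upwards [(hH l hl).eventually (gt_mem_nhds hρ), HZ_pos_eventually hp0 hH]
    with x hx hpos
  exact ((div_lt_iff₀ hpos).1 hx).le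

/-- The key estimate: for a large truncation level `y` and any `L ≥ 0`, the tilted mass
with parameter `μ = L / y` deviates from one by at most a constant times `e^L H(y/2)`. -/
lemma tilt_bound {p : ℤ → ℝ} (hp0 : ∀ z, 0 ≤ p z) (hp1 : HasSum p 1)
    {α : ℝ} (hα : (0 < α ∧ α < 1) ∨ (1 < α ∧ α < 2))
    (hH : ∀ l : ℝ, 0 < l →
      Tendsto (fun x : ℝ => HZ p (l * x) / HZ p x) atTop (nhds (l ^ (-α))))
    (hmean : 1 < α → ∑' z : ℤ, (z : ℝ) * p z = 0) :
    ∃ C, 0 ≤ C ∧ ∀ᶠ y : ℝ in atTop, ∀ L : ℝ, 0 ≤ L →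
      |1 - ∑' z : ℤ, (if |(z : ℝ)| ≤ y then Real.exp (L / y * z) * p z else 0)|
        ≤ C * (Real.exp L * HZ p (y / 2)) := by
  -- Halving multiplies the tail by about `2 ^ α`, which is below `2 ^ k` as soon as `α < k`.
  have hV : ∀ k : ℕ, α < k → ∃ C, 0 ≤ C ∧
      ∀ᶠ y in atTop, truncMoment p k y ≤ C * (y ^ k * HZ p y) := by
    intro k hk
    have h1 : (1 / 2 : ℝ) ^ (-α) < 2 ^ k := by
      rw [one_div, Real.inv_rpow (by norm_num), Real.rpow_neg (by norm_num), inv_inv,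
        ← Real.rpow_natCast]
      exact Real.rpow_lt_rpow_of_exponent_lt (by norm_num) hk
    obtain ⟨ρ, hρ1, hρ2⟩ := exists_between h1
    have hρ0 : 0 ≤ ρ := le_trans (by positivity) hρ1.le
    obtain ⟨y0, hy0⟩ := eventually_atTop.1 (((HZ_pos_eventually hp0 hH).and
      (HZ_mul_le_eventually hp0 hH (by norm_num) hρ1)).and (eventually_gt_atTop 0))
    obtain ⟨C, hC0, hC⟩ := truncMoment_le hp0 hp1 hρ0 hρ2 (hy0 y0 le_rfl).2
      (fun y hy => (hy0 y hy).1.1)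
      (fun y hy => by
        have := (hy0 y hy).1.2
        rwa [one_div_mul_eq_div] at this)
    exact ⟨C, hC0, eventually_atTop.2 ⟨y0, hC⟩⟩
  rcases hα with ⟨-, hα1⟩ | ⟨hα1, hα2⟩
  · obtain ⟨C, hC0, hC⟩ := hV 1 (by simpa using hα1)
    refine ⟨2 + 2 * C, by positivity, ?_⟩
    filter_upwards [hC, eventually_gt_atTop 0] with y hVy hy L hL
    have hHn := HZ_nonneg hp0 y
    have hHa : HZ p y ≤ HZ p (y / 2) := HZ_anti hp0 hp1 (by linarith)
    have hE1 := Real.one_le_exp hL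
    have hEE : Real.exp (L / 2) * Real.exp (L / 2) = Real.exp L := by
      rw [← Real.exp_add]; ring_nf
    have hL2 : L ≤ 2 * Real.exp (L / 2) := by linarith [Real.add_one_le_exp (L / 2)]
    have a1 : HZ p y ≤ Real.exp L * HZ p (y / 2) := by nlinarith
    have a2 : Real.exp (L / 2) * (L / y) * truncMoment p 1 y
        ≤ 2 * C * (Real.exp L * HZ p (y / 2)) := by
      calc _ ≤ Real.exp (L / 2) * (L / y) * (C * (y ^ 1 * HZ p y)) := by gcongr
        _ = Real.exp (L / 2) * L * (C * HZ p y) := by field_simp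
        _ ≤ Real.exp (L / 2) * (2 * Real.exp (L / 2)) * (C * HZ p (y / 2)) := by gcongr
        _ = 2 * C * (Real.exp (L / 2) * Real.exp (L / 2) * HZ p (y / 2)) := by ring
        _ = _ := by rw [hEE]
    linarith [tilt_small hp0 hp1 hL hy]
  · obtain ⟨C, hC0, hC⟩ := hV 2 (by simpa using hα2)
    have h1 : (2 : ℝ) ^ (-α) < 1 / 2 := by
      rw [one_div, ← Real.rpow_neg_one]
      exact Real.rpow_lt_rpow_of_exponent_lt (by norm_num) (by linarith)
    obtain ⟨ρ, hρ1, hρ2⟩ := exists_between h1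
    obtain ⟨y0, hy0⟩ := eventually_atTop.1
      ((HZ_mul_le_eventually hp0 hH (by norm_num) hρ1).and (eventually_gt_atTop 0))
    obtain ⟨D, hD0, hD⟩ := tailMoment_le hp0 hp1 hρ2 (hy0 y0 le_rfl).2
      (fun y hy => (hy0 y hy).1)
    refine ⟨2 + D + 8 * C, by positivity, ?_⟩
    filter_upwards [hC, eventually_gt_atTop 0, eventually_ge_atTop y0] with y hVy hy hyy L hL
    have hHn := HZ_nonneg hp0 y
    have hHa : HZ p y ≤ HZ p (y / 2) := HZ_anti hp0 hp1 (by linarith)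
    have hE1 := Real.one_le_exp hL
    have hEE : Real.exp (L / 2) * Real.exp (L / 2) = Real.exp L := by
      rw [← Real.exp_add]; ring_nf
    have hLE : L ≤ Real.exp L := by linarith [Real.add_one_le_exp L]
    have hL2 : L ^ 2 ≤ 8 * Real.exp (L / 2) := by
      nlinarith [Real.quadratic_le_exp_of_nonneg (show 0 ≤ L / 2 by positivity)]
    have a1 : HZ p y ≤ Real.exp L * HZ p (y / 2) := by nlinarith
    have a2 : Real.exp (L / 2) * (L / y) ^ 2 * truncMoment p 2 y
        ≤ 8 * C * (Real.exp L * HZ p (y / 2)) := by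
      calc _ ≤ Real.exp (L / 2) * (L / y) ^ 2 * (C * (y ^ 2 * HZ p y)) := by gcongr
        _ = Real.exp (L / 2) * L ^ 2 * (C * HZ p y) := by field_simp
        _ ≤ Real.exp (L / 2) * (8 * Real.exp (L / 2)) * (C * HZ p (y / 2)) := by gcongr
        _ = 8 * C * (Real.exp (L / 2) * Real.exp (L / 2) * HZ p (y / 2)) := by ring
        _ = _ := by rw [hEE]
    have a3 : L / y * ∑' z : ℤ, (if y < |(z : ℝ)| then |(z : ℝ)| * p z else 0)
        ≤ D * (Real.exp L * HZ p (y / 2)) := by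
      calc _ ≤ L / y * (D * (y * HZ p y)) := by gcongr; exact (hD y hyy).2
        _ = D * (L * HZ p y) := by field_simp
        _ ≤ _ := by gcongr
    linarith [tilt_large hp0 hp1 hL hy (hmean hα1) (hD y hyy).1]

/-- for every fixed `γ > 0` there exist `c > 0`, `n₀` and `θ₀ > 0` such that
for all `n ≥ n₀` and integers `x ≥ θ₀·aₙ` one has `|1 − m₀| ≤ c/n`; consequently `m₀ⁿ` is
bounded above uniformly over all such `n` and `x`. -/
theorem tilted_mass_close_to_one (p : ℤ → ℝ) (α q : ℝ) (a : ℕ → ℝ)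
    (hp0 : ∀ z, 0 ≤ p z) (hp1 : HasSum p 1)
    (hap : ∀ c d : ℤ, (∀ z, p z ≠ 0 → d ∣ (z - c)) → d = 1 ∨ d = -1)
    (hα : (0 < α ∧ α < 1) ∨ (1 < α ∧ α < 2))
    (hH : ∀ l : ℝ, 0 < l →
      Tendsto (fun x : ℝ => HZ p (l * x) / HZ p x) atTop (nhds (l ^ (-α))))
    (hq : 0 < q) (hq1 : q ≤ 1)
    (hFq : Tendsto (fun x : ℝ => FbarZ p x / HZ p x) atTop (nhds q))
    (hmean : 1 < α → ∑' z : ℤ, (z : ℝ) * p z = 0)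
    (ha : Tendsto a atTop atTop)
    (haH : Tendsto (fun n : ℕ => (n : ℝ) * HZ p (a n)) atTop (nhds 1)) :
    ∀ γ : ℝ, 0 < γ →
      ∃ c : ℝ, 0 < c ∧ ∃ M : ℝ, ∃ n₀ : ℕ, ∃ θ₀ : ℝ, 0 < θ₀ ∧
        ∀ n : ℕ, n₀ ≤ n → ∀ x : ℤ, θ₀ * a n ≤ (x : ℝ) →
          |1 - tiltM0 p γ n x| ≤ c / (n : ℝ) ∧ (tiltM0 p γ n x) ^ n ≤ M := by
  intro γ hγ
  obtain ⟨C, hC0, hC⟩ := tilt_bound hp0 hp1 hα hH hmean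
  have hαpos : 0 < α := by rcases hα with h | h <;> linarith [h.1]
  have hK : ((γ / 2) ^ (-α) : ℝ) < (γ / 2) ^ (-α) + 1 := by linarith
  set K : ℝ := (γ / 2) ^ (-α) + 1 with hKdef
  have hK0 : 0 < K := by positivity
  -- Conditions that hold once the level `x` is large, whatever `n` is.
  have hx : ∀ᶠ x : ℝ in atTop, 0 < x ∧ 0 < HZ p x ∧ HZ p (γ / 2 * x) ≤ K * HZ p x ∧
      q / 2 * HZ p x ≤ FbarZ p x ∧ ∀ L : ℝ, 0 ≤ L →
      |1 - ∑' z : ℤ, (if |(z : ℝ)| ≤ γ * x then Real.exp (L / (γ * x) * z) * p z else 0)|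
        ≤ C * (Real.exp L * HZ p (γ * x / 2)) := by
    filter_upwards [eventually_gt_atTop 0, HZ_pos_eventually hp0 hH,
      HZ_mul_le_eventually hp0 hH (by positivity) hK,
      hFq.eventually (lt_mem_nhds (show q / 2 < q by linarith)),
      (tendsto_id.const_mul_atTop hγ).eventually hC] with x h1 h2 h3 h4 h5
    exact ⟨h1, h2, h3, ((lt_div_iff₀ h2).1 h4).le, h5⟩
  obtain ⟨x0, hx0⟩ := eventually_atTop.1 hx
  -- With `θ₀ = 2` one has `n H(θ₀ aₙ) → 2 ^ (-α) < 1`, so `Λ ≥ 1` eventually.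
  have hn : Tendsto (fun n : ℕ => (n : ℝ) * HZ p (2 * a n)) atTop (nhds (2 ^ (-α))) := by
    have h := haH.mul ((hH 2 two_pos).comp ha)
    rw [one_mul] at h
    refine h.congr' ?_
    filter_upwards [ha.eventually (HZ_pos_eventually hp0 hH)] with n hn
    simp only [Function.comp_apply]
    field_simp
  have h2α : (2 : ℝ) ^ (-α) < 1 := Real.rpow_lt_one_of_one_lt_of_neg (by norm_num) (by linarith)
  obtain ⟨n0, hn0⟩ := eventually_atTop.1 (((hn.eventually (gt_mem_nhds h2α)).and
    (ha.eventually (eventually_ge_atTop (max x0 0)))).and (eventually_ge_atTop 1))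
  set c : ℝ := C * (K * (2 / q)) + 1 with hc
  have hc0 : 0 < c := by positivity
  refine ⟨c, hc0, Real.exp c, n0, 2, two_pos, ?_⟩
  intro n hnn x hxx
  obtain ⟨⟨hnH, hna⟩, hn1⟩ := hn0 n hnn
  have hnpos : (0 : ℝ) < n := by exact_mod_cast hn1
  have hxge : x0 ≤ (x : ℝ) := by
    have := le_max_left x0 0
    have := le_max_right x0 0
    linarith
  obtain ⟨hxpos, hHpos, hHK, hFH, hmain⟩ := hx0 x hxge
  have hF : 0 < FbarZ p x := lt_of_lt_of_le (by positivity) hFH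
  have hΛ : 1 ≤ tiltLambda p n x := by
    unfold tiltLambda
    rw [le_div_iff₀ (by positivity), one_mul]
    calc (n : ℝ) * FbarZ p x ≤ n * HZ p (2 * a n) := by
          gcongr
          exact (FbarZ_le_HZ hp0 hp1 _).trans (HZ_anti hp0 hp1 hxx)
      _ ≤ 1 := hnH.le
  have hexp : Real.exp (Real.log (tiltLambda p n x)) = 1 / (n * FbarZ p x) := by
    rw [Real.exp_log (by linarith)]; rfl
  have hfirst : |1 - tiltM0 p γ n x| ≤ c / n := by
    refine (hmain _ (Real.log_nonneg hΛ)).trans ?_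
    rw [hexp, show γ * (x : ℝ) / 2 = γ / 2 * x by ring]
    have h1 : HZ p x ≤ 2 / q * FbarZ p x := by
      rw [div_mul_eq_mul_div, le_div_iff₀ hq]; linarith
    calc C * (1 / (n * FbarZ p x) * HZ p (γ / 2 * x))
        ≤ C * (1 / (n * FbarZ p x) * (K * (2 / q * FbarZ p x))) := by
          gcongr
          exact hHK.trans (by gcongr)
      _ = C * (K * (2 / q)) / n := by field_simp
      _ ≤ c / n := by gcongr; linarith
  refine ⟨hfirst, ?_⟩
  have hm0 : 0 ≤ tiltM0 p γ n x := tsum_nonneg fun z => by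
    have := hp0 z
    split_ifs <;> positivity
  have hm1 : tiltM0 p γ n x ≤ Real.exp (c / n) := by
    have := (abs_le.1 hfirst).1
    linarith [Real.add_one_le_exp (c / n)]
  calc tiltM0 p γ n x ^ n ≤ Real.exp (c / n) ^ n := by gcongr
    _ = Real.exp c := by rw [← Real.exp_nat_mul]; congr 1; field_simp
end
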